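/- arXiv:math/0412354 — 3 statements merged into one kernel-verified Lean document; each statement's English description precedes it below -/
import Mathlib

section
/- For every quadratic (real-valued) primitive Dirichlet character χ of conductor k > 1, the Dirichlet L-function L(χ, ·), i.e., the meromorphic continuation to ℂ of s ↦ ∑_{n=1}^∞ χ(n) n^{−s}, is differentially transcendental: there do not exist n ∈ ℕ and a nonzero polynomial P ∈ ℂ[X₀, X₁, …, X_{n+1}] such that P(s, L(χ,s), L′(χ,s), …, L⁽ⁿ⁾(χ,s)) = 0 for every s ∈ ℂ at which L(χ, ·) is analytic. -/
/-- A function `f : ℂ → ℂ` (meromorphic on `ℂ`) is differentially algebraic over `ℂ(z)`: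
there are `n ∈ ℕ` and a nonzero polynomial `P ∈ ℂ[X₀, …, X_{n+1}]` such that
`P (z, f z, f' z, …, f⁽ⁿ⁾ z) = 0` at every point `z` where `f` is analytic. -/
def DifferentiallyAlgebraic (f : ℂ → ℂ) : Prop :=
  ∃ (n : ℕ) (P : MvPolynomial (Fin (n + 2)) ℂ),
    P ≠ 0 ∧ ∀ z : ℂ, AnalyticAt ℂ f z →
      MvPolynomial.eval
        (fun i : Fin (n + 2) => if i.val = 0 then z else iteratedDeriv (i.val - 1) f z) P = 0

open Filter Topology

lemma aux_limit {A : ArithmeticFunction ℂ} (hA : LSeries.abscissaOfAbsConv A < ⊤) (n i : ℕ)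
    (h0 : ∀ m ≤ n, A m = 0) :
    Tendsto (fun t : ℕ => (t : ℂ) ^ i * (((n : ℂ) + 1) ^ t * LSeries A t - A (n + 1)))
      atTop (𝓝 0) := by
  set B : ℕ → ℂ := fun m => if m = n + 1 then 0 else A m with hB
  have hBA : LSeries.abscissaOfAbsConv B = LSeries.abscissaOfAbsConv A := by
    apply LSeries.abscissaOfAbsConv_congr'
    filter_upwards [eventually_gt_atTop (n + 1)] with m hm
    simp [hB, hm.ne']
  have hB0 : ∀ m ≤ n + 1, B m = 0 := by
    intro m hm
    by_cases h : m = n + 1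
    · simp [hB, h]
    · simp only [hB, h, if_false]
      exact h0 m (by omega)
  have hlim := (LSeries.tendsto_cpow_mul_atTop hB0 (hBA ▸ hA)).comp
    (tendsto_natCast_atTop_atTop (R := ℝ))
  have hgeo := tendsto_pow_const_mul_const_pow_of_abs_lt_one i
    (r := ((n : ℝ) + 1) / ((n : ℝ) + 2)) (by
      rw [abs_of_nonneg (by positivity), div_lt_one (by positivity)]; linarith)
  have hgeo' := (Complex.continuous_ofReal.tendsto 0).comp hgeo
  have hprod := hgeo'.mul hlim
  simp only [Complex.ofReal_zero, zero_mul] at hprod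
  refine hprod.congr' ?_
  obtain ⟨y, hy⟩ := EReal.lt_iff_exists_real_btwn.mp hA
  filter_upwards [(tendsto_natCast_atTop_atTop (R := ℝ)).eventually_gt_atTop y] with t ht
  have hs : LSeriesSummable A (t : ℂ) := by
    apply LSeriesSummable_of_abscissaOfAbsConv_lt_re
    refine hy.1.trans ?_
    simp only [Complex.natCast_re]
    exact EReal.coe_lt_coe_iff.mpr ht
  have hsplit : LSeries A t = A (n + 1) / ((n : ℂ) + 1) ^ t + LSeries B t := by
    rw [LSeries, hs.tsum_eq_add_tsum_ite (n + 1)]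
    congr 1
    · simp [LSeries.term]
    · rw [LSeries]
      congr 1
      ext m
      by_cases h : m = n + 1 <;> simp [LSeries.term, hB, h]
  have h1 : ((n : ℂ) + 1) ≠ 0 := by exact_mod_cast n.succ_ne_zero
  have h2 : ((n : ℂ) + 2) ≠ 0 := by exact_mod_cast (n+1).succ_ne_zero
  have h3 : ((n : ℂ) + 1 + 1) = n + 2 := by ring
  simp only [Function.comp, hsplit]
  push_cast
  rw [Complex.cpow_natCast, h3, div_pow]
  field_simp
  ring

lemma aux_poly (q : Polynomial ℂ) (h : Tendsto (fun t : ℕ => q.eval (t : ℂ)) atTop (𝓝 0)) :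
    q = 0 := by
  by_cases hd : 0 < q.degree
  · have h1 := Polynomial.tendsto_norm_atTop q hd (l := atTop) (z := fun t : ℕ => (t : ℂ)) (by
      simpa using tendsto_natCast_atTop_atTop (R := ℝ))
    exact absurd h.norm (not_tendsto_nhds_of_tendsto_atTop h1 _)
  · have := Polynomial.eq_C_of_degree_le_zero (not_lt.mp hd)
    rw [this] at h ⊢
    simp only [Polynomial.eval_C] at h
    have := tendsto_nhds_unique h tendsto_const_nhds
    simp [← this]

lemma aux_indep (N : ℕ) (A : ℕ → ArithmeticFunction ℂ)
    (hA : ∀ i, LSeries.abscissaOfAbsConv (A i) < ⊤)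
    (h : ∀ᶠ t : ℕ in atTop, ∑ i ∈ Finset.range N, (t : ℂ) ^ i * LSeries (A i) t = 0) :
    ∀ i < N, A i = 0 := by
  suffices H : ∀ m, ∀ i < N, A i m = 0 by
    intro i hi; ext m; simpa using H m i hi
  intro m
  induction m using Nat.strong_induction_on with
  | _ m ih =>
  rcases m with _ | n
  · simp
  set q : Polynomial ℂ := ∑ i ∈ Finset.range N, Polynomial.C (A i (n + 1)) * Polynomial.X ^ i
    with hq
  have hq0 : q = 0 := by
    apply aux_poly
    have := tendsto_finsetSum (Finset.range N) (fun i hi => aux_limit (hA i) n i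
      (fun m hm => ih m (by omega) i (Finset.mem_range.mp hi)))
    simp only [Finset.sum_const_zero] at this
    rw [← neg_zero]
    refine this.neg.congr' ?_
    filter_upwards [h] with t ht
    have : ∑ i ∈ Finset.range N, (t : ℂ) ^ i * (((n : ℂ) + 1) ^ t * LSeries (A i) t - A i (n + 1))
      = ((n : ℂ) + 1) ^ t * (∑ i ∈ Finset.range N, (t : ℂ) ^ i * LSeries (A i) t)
        - q.eval (t : ℂ) := by
      rw [hq, Polynomial.eval_finsetSum, Finset.mul_sum, ← Finset.sum_sub_distrib]
      apply Finset.sum_congr rfl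
      intro i _
      simp
      ring
    rw [this, ht]; simp
  intro i hi
  have := congrArg (fun p => p.coeff i) hq0
  simpa [hq, Polynomial.finsetSum_coeff, Polynomial.coeff_C_mul, Polynomial.coeff_X_pow, hi]
    using this

/-- Pointwise product of an arithmetic function with any function. -/
noncomputable def wMul (v : ℕ → ℂ) (f : ArithmeticFunction ℂ) : ArithmeticFunction ℂ :=
  ⟨fun n => v n * f n, by simp⟩

lemma wMul_apply (v : ℕ → ℂ) (f : ArithmeticFunction ℂ) (n : ℕ) : wMul v f n = v n * f n := rfl

/-- Derivation of the ring of arithmetic functions attached to an additive function. -/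
noncomputable def addDer (v : ℕ → ℂ) (hv : ∀ a b, a ≠ 0 → b ≠ 0 → v (a * b) = v a + v b) :
    Derivation ℂ (ArithmeticFunction ℂ) (ArithmeticFunction ℂ) :=
  Derivation.mk'
    { toFun := wMul v
      map_add' := fun f g => by ext n; simp [wMul_apply, mul_add]
      map_smul' := fun c f => by ext n; simp [wMul_apply]; ring }
    (fun f g => by
      ext n
      simp only [LinearMap.coe_mk, AddHom.coe_mk, wMul_apply,
        ArithmeticFunction.mul_apply, ArithmeticFunction.add_apply, smul_eq_mul, Finset.mul_sum]
      rw [Nat.sum_divisorsAntidiagonal' (f := fun a b => g a * (v b * f b)),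
        Nat.sum_divisorsAntidiagonal (f := fun a b => f a * (v b * g b)),
        Nat.sum_divisorsAntidiagonal (f := fun a b => v n * (f a * g b)), ← Finset.sum_add_distrib]
      apply Finset.sum_congr rfl
      intro d hd
      have hdn := Nat.dvd_of_mem_divisors hd
      have hn : n ≠ 0 := (Nat.mem_divisors.mp hd).2
      obtain ⟨e, rfl⟩ := hdn
      have hd0 : d ≠ 0 := fun h => by simp [h] at hn
      have he0 : e ≠ 0 := fun h => by simp [h] at hn
      rw [Nat.mul_div_cancel_left _ (Nat.pos_of_ne_zero hd0), hv d e hd0 he0]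
      ring)

lemma addDer_apply (v : ℕ → ℂ) (hv) (f : ArithmeticFunction ℂ) (n : ℕ) :
    addDer v hv f n = v n * f n := rfl

lemma der_aeval {σ R : Type*} [Fintype σ] [CommRing R] [Algebra ℂ R] (D : Derivation ℂ R R)
    (g : σ → R) (P : MvPolynomial σ ℂ) :
    D (MvPolynomial.aeval g P) =
      ∑ i, MvPolynomial.aeval g (MvPolynomial.pderiv i P) * D (g i) := by
  classical
  induction P using MvPolynomial.induction_on with
  | C a => simp
  | add p q hp hq => simp [hp, hq, Finset.sum_add_distrib, add_mul]
  | mul_X p j hp =>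
    simp only [map_mul, MvPolynomial.aeval_X, Derivation.leibniz, smul_eq_mul, hp, map_add,
      MvPolynomial.pderiv_X, add_mul, Finset.sum_add_distrib, Finset.mul_sum]
    congr 1
    · rw [Finset.sum_eq_single j]
      · simp
      · intro b _ hb; simp [Pi.single_apply, hb.symm]
      · simp
    · exact Finset.sum_congr rfl fun i _ => by ring

lemma const_of_pderiv {σ : Type*} (P : MvPolynomial σ ℂ)
    (h : ∀ i, MvPolynomial.pderiv i P = 0) : P = MvPolynomial.C (MvPolynomial.coeff 0 P) := by
  classical
  ext m
  rw [MvPolynomial.coeff_C]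
  split_ifs with hm
  · rw [hm]
  · obtain ⟨i, hi⟩ : ∃ i, m i ≠ 0 := by
      by_contra! hc
      exact hm (Finsupp.ext fun i => by simp [hc i])
    have := congrArg (MvPolynomial.coeff (m - Finsupp.single i 1)) (h i)
    rw [MvPolynomial.coeff_pderiv] at this
    have hle : Finsupp.single i 1 ≤ m := by
      rw [Finsupp.single_le_iff]; omega
    rw [tsub_add_cancel_of_le hle, MvPolynomial.coeff_zero] at this
    refine (mul_eq_zero.mp this).resolve_right ?_
    exact Nat.cast_add_one_ne_zero _

/-- If the relations of `g` are stable under all partial derivatives, there is none. -/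
lemma no_relation {σ R : Type*} [CommRing R] [Nontrivial R] [Algebra ℂ R] (g : σ → R)
    (key : ∀ P : MvPolynomial σ ℂ, MvPolynomial.aeval g P = 0 →
      ∀ i, MvPolynomial.aeval g (MvPolynomial.pderiv i P) = 0)
    (P : MvPolynomial σ ℂ) (hP : MvPolynomial.aeval g P = 0) : P = 0 := by
  suffices H : ∀ d : ℕ, ∀ P : MvPolynomial σ ℂ, (∀ m ∈ P.support, m.degree < d) →
      MvPolynomial.aeval g P = 0 → P = 0 from
    H (P.support.sup Finsupp.degree + 1) P
      (fun m hm => Nat.lt_succ_of_le (Finset.le_sup (f := Finsupp.degree) hm)) hP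
  intro d
  induction d with
  | zero =>
    intro P h _
    rw [← MvPolynomial.support_eq_empty, Finset.eq_empty_iff_forall_notMem]
    intro m hm
    exact absurd (h m hm) (by omega)
  | succ d ih =>
    intro P h h0
    have hc := const_of_pderiv P (fun i => ih _ (fun m hm => by
      rw [MvPolynomial.mem_support_iff, MvPolynomial.coeff_pderiv] at hm
      have := h (m + Finsupp.single i 1)
        (MvPolynomial.mem_support_iff.mpr (left_ne_zero_of_mul hm))
      simp at this
      omega) (key P h0 i))
    rw [hc] at h0 ⊢
    simp only [MvPolynomial.aeval_C] at h0
    rw [(map_eq_zero_iff _ (algebraMap ℂ R).injective).mp h0, map_zero]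

lemma key_relation (N k : ℕ) (c : ℕ → ℂ) (g : Fin N → ArithmeticFunction ℂ)
    (hg : ∀ j n, n ≠ 0 → g j n = (-(Real.log n : ℂ)) ^ (j : ℕ) * c n)
    (hc : ∀ p, p.Prime → k < p → c p ≠ 0)
    (P : MvPolynomial (Fin N) ℂ) (hP : MvPolynomial.aeval g P = 0) (i : Fin N) :
    MvPolynomial.aeval g (MvPolynomial.pderiv i P) = 0 := by
  set Q : Fin N → ArithmeticFunction ℂ :=
    fun i => MvPolynomial.aeval g (MvPolynomial.pderiv i P) with hQ
  suffices H : ∀ m, ∀ j, Q j m = 0 by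
    ext m; simpa using H m i
  intro m
  induction m using Nat.strong_induction_on with
  | _ m ih =>
  rcases Nat.eq_zero_or_pos m with rfl | hm
  · simp
  set q : Polynomial ℂ := ∑ j : Fin N, Polynomial.C (Q j m) * Polynomial.X ^ (j : ℕ) with hq
  have hroot : ∀ p, p.Prime → k < p → q.eval (-(Real.log p : ℂ)) = 0 := by
    intro p hp hkp
    have hD := der_aeval (addDer (fun n => (n.factorization p : ℂ)) (fun a b ha hb => by
      simp [Nat.factorization_mul ha hb])) g P
    rw [hP, map_zero] at hD
    have hD' := congrArg (fun f : ArithmeticFunction ℂ => f (m * p)) hD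
    have hsum : ∀ (s : Finset (Fin N)) (F : Fin N → ArithmeticFunction ℂ) (n : ℕ),
        (∑ i ∈ s, F i) n = ∑ i ∈ s, F i n := by
      classical
      intro s F n
      induction s using Finset.induction_on with
      | empty => simp
      | insert a s ha ih => simp [Finset.sum_insert ha, ih]
    simp only [hsum, ArithmeticFunction.zero_apply, ArithmeticFunction.mul_apply,
      addDer_apply] at hD'
    have hterm : ∀ j, ∑ x ∈ (m * p).divisorsAntidiagonal,
        Q j x.1 * ((x.2.factorization p : ℂ) * g j x.2) = Q j m * g j p := by
      intro j
      rw [Finset.sum_eq_single (m, p)]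
      · simp [hp.factorization]
      · rintro ⟨a, b⟩ hab hne
        rw [Nat.mem_divisorsAntidiagonal] at hab
        by_cases hpb : p ∣ b
        · obtain ⟨b, rfl⟩ := hpb
          have h1 : a * b = m := by
            apply Nat.eq_of_mul_eq_mul_right hp.pos
            rw [← hab.1]; ring
          have ham : a < m := by
            refine lt_of_le_of_ne (Nat.le_of_dvd hm ⟨b, h1.symm⟩) ?_
            rintro rfl
            have : b = 1 := by
              have h2 : a * b = a * 1 := by simpa using h1
              exact Nat.eq_of_mul_eq_mul_left hm h2
            exact hne (by simp [this])
          simp [ih a ham j]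
        · simp [Nat.factorization_eq_zero_of_not_dvd hpb]
      · intro h
        exact absurd (Nat.mem_divisorsAntidiagonal.mpr
          ⟨rfl, (Nat.mul_pos hm hp.pos).ne'⟩) h
    have h3 : ∑ j, Q j m * g j p = 0 := by
      rw [hD']
      exact (Finset.sum_congr rfl fun j _ => hterm j).symm
    have h4 : ∑ j, Q j m * g j p = q.eval (-(Real.log p : ℂ)) * c p := by
      rw [hq, Polynomial.eval_finsetSum, Finset.sum_mul]
      refine Finset.sum_congr rfl fun j _ => ?_
      rw [hg j p hp.ne_zero]
      simp only [Polynomial.eval_mul, Polynomial.eval_C, Polynomial.eval_pow, Polynomial.eval_X]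
      ring
    exact (mul_eq_zero.mp (h4.symm.trans h3)).resolve_right (hc p hp hkp)
  have hq0 : q = 0 := by
    apply Polynomial.eq_zero_of_infinite_isRoot
    have hinf : ({p : ℕ | p.Prime ∧ k < p}).Infinite := by
      rw [Set.infinite_iff_exists_gt]
      intro a
      obtain ⟨p, h1, h2⟩ := Nat.exists_infinite_primes (a + k + 1)
      exact ⟨p, ⟨h2, by omega⟩, by omega⟩
    refine (hinf.image (f := fun p : ℕ => (-(Real.log p : ℂ))) ?_).mono ?_
    · intro a ha b hb hab
      simp only [neg_inj, Complex.ofReal_inj] at hab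
      exact_mod_cast Real.log_injOn_pos (Set.mem_Ioi.mpr (Nat.cast_pos.mpr ha.1.pos))
        (Set.mem_Ioi.mpr (Nat.cast_pos.mpr hb.1.pos)) hab
    · rintro _ ⟨p, hp, rfl⟩
      exact hroot p hp.1 hp.2
  intro j
  have := congrArg (fun r => r.coeff (j : ℕ)) hq0
  simpa [hq, Polynomial.finsetSum_coeff, Polynomial.coeff_C_mul, Polynomial.coeff_X_pow,
    Fin.val_inj] using this

lemma hasSum_aeval {σ : Type*} (g : σ → ArithmeticFunction ℂ) (s : ℂ)
    (hs : ∀ i, LSeriesSummable (g i) s) (P : MvPolynomial σ ℂ) :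
    LSeriesHasSum (MvPolynomial.aeval g P : ArithmeticFunction ℂ) s
      (MvPolynomial.eval (fun i => LSeries (g i) s) P) := by
  induction P using MvPolynomial.induction_on with
  | C a =>
    simp only [MvPolynomial.aeval_C, MvPolynomial.eval_C, Algebra.algebraMap_eq_smul_one]
    unfold LSeriesHasSum
    convert! hasSum_ite_eq (1 : ℕ) a using 2 with n
    by_cases h : n = 1
    · simp [LSeries.term, h]
    · simp [LSeries.term, h, ArithmeticFunction.one_apply]
  | add p q hp hq =>
    simp only [map_add]
    exact hp.add hq
  | mul_X p j hp =>
    simp only [map_mul, MvPolynomial.aeval_X, MvPolynomial.eval_X]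
    exact ArithmeticFunction.LSeriesHasSum_mul hp (hs j).LSeriesHasSum

lemma logMul_iter (f : ℕ → ℂ) (j n : ℕ) :
    (LSeries.logMul^[j] f) n = (Complex.log n) ^ j * f n := by
  induction j generalizing f with
  | zero => simp
  | succ j ih => rw [Function.iterate_succ_apply, ih, LSeries.logMul]; ring

/-- For every quadratic (real-valued) primitive Dirichlet character `χ` of conductor
`k > 1`, the Dirichlet L-function `L(χ, ·)` is differentially transcendental. -/
theorem dirichletLFunction_diffTranscendental (k : ℕ) [NeZero k] (hk : 1 < k)
    (χ : DirichletCharacter ℂ k)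
    (hquad : ∀ a : ZMod k, χ a = -1 ∨ χ a = 0 ∨ χ a = 1)
    (hprim : χ.IsPrimitive) :
    ¬ DifferentiallyAlgebraic (DirichletCharacter.LFunction χ) := by
  rintro ⟨n, P, hP0, hP⟩
  have hχ : χ ≠ 1 := by
    rintro rfl
    have h1 := DirichletCharacter.conductor_one (R := ℂ) (n := k)
    rw [DirichletCharacter.IsPrimitive] at hprim
    omega
  set c : ℕ → ℂ := fun m => χ m with hc
  let g : Fin (n + 1) → ArithmeticFunction ℂ := fun j =>
    ⟨fun m => if m = 0 then 0 else (-(Real.log m : ℂ)) ^ (j : ℕ) * c m, by simp⟩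
  have hg : ∀ j m, m ≠ 0 → g j m = (-(Real.log m : ℂ)) ^ (j : ℕ) * c m := by
    intro j m hm
    exact if_neg hm
  have hcp : ∀ p, p.Prime → k < p → c p ≠ 0 := by
    intro p hp hkp
    have : IsUnit ((p : ℕ) : ZMod k) := by
      rw [ZMod.isUnit_iff_coprime]
      exact (hp.coprime_iff_not_dvd).mpr (fun h => absurd (Nat.le_of_dvd (by omega) h) (by omega))
    exact (this.map χ).ne_zero
  -- abscissa of absolute convergence
  have habs : LSeries.abscissaOfAbsConv c ≤ 1 :=
    LSeries.abscissaOfAbsConv_le_of_le_const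
      ⟨1, fun m _ => by simpa [hc] using DirichletCharacter.norm_le_one χ _⟩
  have hlt : ∀ s : ℂ, 1 < s.re → LSeries.abscissaOfAbsConv c < s.re := fun s hs =>
    habs.trans_lt (by exact_mod_cast hs)
  have hgj : ∀ j (s : ℂ) m, LSeries.term (g j) s m =
      LSeries.term ((-1 : ℂ) ^ (j : ℕ) • (LSeries.logMul^[(j : ℕ)] c)) s m := by
    intro j s m
    by_cases hm : m = 0
    · simp [hm]
    · simp only [LSeries.term_of_ne_zero hm, hg j m hm, Pi.smul_apply, smul_eq_mul, logMul_iter]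
      rw [neg_pow, ← Complex.natCast_log]
      ring
  have hsumm : ∀ j (s : ℂ), 1 < s.re → LSeriesSummable (g j) s := by
    intro j s hs
    have h1 : LSeriesSummable (LSeries.logMul^[(j : ℕ)] c) s := by
      apply LSeriesSummable_of_abscissaOfAbsConv_lt_re
      rw [LSeries.absicssaOfAbsConv_logPowMul]
      exact hlt s hs
    exact (h1.smul ((-1 : ℂ) ^ (j : ℕ))).congr (fun m => (hgj j s m).symm)
  have hval : ∀ j (s : ℂ), 1 < s.re →
      LSeries (g j) s = iteratedDeriv j (DirichletCharacter.LFunction χ) s := by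
    intro j s hs
    have h1 : DirichletCharacter.LFunction χ =ᶠ[𝓝 s] LSeries c := by
      filter_upwards [(isOpen_lt continuous_const Complex.continuous_re).mem_nhds hs] with z hz
      exact DirichletCharacter.LFunction_eq_LSeries χ hz
    rw [(h1.iteratedDeriv_eq _), LSeries_iteratedDeriv _ (hlt s hs), LSeries,
      tsum_congr (hgj j s)]
    exact LSeries_smul _ _ _
  have : Nontrivial (ArithmeticFunction ℂ) := by
    refine ⟨⟨0, 1, fun h => ?_⟩⟩
    have := congrArg (fun f : ArithmeticFunction ℂ => f 1) h
    simp at this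
  have hnor := no_relation g (key_relation (n + 1) k c g hg hcp)
  set p := MvPolynomial.finSuccEquiv ℂ (n + 1) P with hp
  have hA : ∀ i < p.natDegree + 1, (MvPolynomial.aeval g (p.coeff i) : ArithmeticFunction ℂ) = 0 := by
    apply aux_indep (p.natDegree + 1) (fun i => MvPolynomial.aeval g (p.coeff i))
    · intro i
      refine lt_of_le_of_lt (hasSum_aeval g 2 (fun j => hsumm j 2 (by simp))
        (p.coeff i)).LSeriesSummable.abscissaOfAbsConv_le ?_
      exact EReal.coe_lt_top _
    · filter_upwards [eventually_gt_atTop 1] with t ht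
      have hre : 1 < (t : ℂ).re := by simpa using ht
      have h1 := hP t ((DirichletCharacter.differentiable_LFunction hχ).analyticAt _)
      have h2 : (fun i : Fin (n + 2) => if i.val = 0 then (t : ℂ) else
          iteratedDeriv (i.val - 1) (DirichletCharacter.LFunction χ) t) =
          Fin.cons (t : ℂ) (fun j => LSeries (g j) t) := by
        funext i
        refine Fin.cases ?_ (fun j => ?_) i
        · simp
        · simp [hval j t hre]
      rw [h2, MvPolynomial.eval_eq_eval_mv_eval', ← hp, Polynomial.eval_map,
        Polynomial.eval₂_eq_sum_range] at h1
      rw [← h1]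
      refine Finset.sum_congr rfl fun i _ => ?_
      rw [(hasSum_aeval g t (fun j => hsumm j t hre) (p.coeff i)).LSeries_eq, mul_comm]
  apply hP0
  have hp0 : p = 0 := by
    ext1 i
    by_cases hi : i < p.natDegree + 1
    · rw [hnor _ (hA i hi), Polynomial.coeff_zero]
    · rw [Polynomial.coeff_eq_zero_of_natDegree_lt (by omega), Polynomial.coeff_zero]
  exact (map_eq_zero_iff _ (MvPolynomial.finSuccEquiv ℂ (n + 1)).injective).mp hp0
end

section
/- The function H₁ meromorphic on ℂ defined by H₁(z) = ∑_{n=0}^∞ 1/(n+z)² for all z ∈ ℂ that are not nonpositive integers (the trigamma function, equal to the second derivative of log Γ) is differentially transcendental: there do not exist N ∈ ℕ and a nonzero polynomial P ∈ ℂ[X₀, X₁, …, X_{N+1}] such that P(z, H₁(z), H₁′(z), …, H₁⁽ᴺ⁾(z)) = 0 for every z ∈ ℂ that is not a nonpositive integer. -/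
open MvPolynomial in
/-- The twisted translation `P ↦ P^σ(X + r)`. -/
noncomputable def twT {K ι : Type} [Field K] (σ : K →+* K) (r : ι → K) :
    MvPolynomial ι K →+* MvPolynomial ι K :=
  eval₂Hom (C.comp σ) (fun i => X i + C (r i))

section abstractPart
open MvPolynomial

variable {K ι : Type} [Field K] (σ : K →+* K) (r : ι → K)

lemma twT_C (a : K) : twT σ r (C a) = C (σ a) := by simp [twT]
lemma twT_X (i : ι) : twT σ r (X i) = X i + C (r i) := by simp [twT]

lemma twT_pderiv (i : ι) (P : MvPolynomial ι K) :
    pderiv i (twT σ r P) = twT σ r (pderiv i P) := by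
  classical
  induction P using MvPolynomial.induction_on with
  | C a => simp [twT_C]
  | add p q hp hq => simp [hp, hq]
  | mul_X p j hp =>
    simp only [map_mul, pderiv_mul, hp, twT_X, map_add, pderiv_C, pderiv_X, add_zero]
    by_cases h : j = i
    · subst h; simp
    · simp [h]

lemma low_mul_X {n : ℕ} {E : MvPolynomial ι K}
    (h : ∀ α, n ≤ α.degree → coeff α E = 0) (i : ι) :
    ∀ α, n + 1 ≤ α.degree → coeff α (E * X i) = 0 := by
  classical
  intro α hα
  rw [coeff_mul_X']
  split_ifs with hi
  · apply h
    have h1 : (α - Finsupp.single i 1) + Finsupp.single i 1 = α :=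
      Finsupp.sub_add_single_one_cancel (Finsupp.mem_support_iff.mp hi)
    have h2 := congrArg Finsupp.degree h1
    rw [map_add, Finsupp.degree_single] at h2
    omega
  · rfl

lemma twT_monomial_one (n : ℕ) : ∀ s : ι →₀ ℕ, s.degree = n →
    ∀ α : ι →₀ ℕ, n ≤ α.degree →
      coeff α (twT σ r (monomial s 1) - monomial s 1) = 0 := by
  classical
  induction n with
  | zero =>
    intro s hs α _
    have : s = 0 := (Finsupp.degree_eq_zero_iff s).mp hs
    subst this
    have : (monomial (0 : ι →₀ ℕ) (1 : K)) = 1 := rfl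
    simp [this]
  | succ n ih =>
    intro s hs α hα
    have hs0 : s ≠ 0 := by rintro rfl; simp at hs
    obtain ⟨i, hi⟩ := Finsupp.support_nonempty_iff.mpr hs0
    have h1 : (s - Finsupp.single i 1) + Finsupp.single i 1 = s :=
      Finsupp.sub_add_single_one_cancel (Finsupp.mem_support_iff.mp hi)
    set t := s - Finsupp.single i 1 with ht
    have h2 := congrArg Finsupp.degree h1
    rw [map_add, Finsupp.degree_single, hs] at h2
    have h3 : t.degree = n := by omega
    have hm : monomial s (1 : K) = monomial t 1 * X i := by
      rw [X, monomial_mul, h1, one_mul]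
    have key : twT σ r (monomial s 1) - monomial s 1 =
        (twT σ r (monomial t 1) - monomial t 1) * X i
        + C (r i) * (twT σ r (monomial t 1) - monomial t 1) + C (r i) * monomial t 1 := by
      rw [hm, map_mul, twT_X]; ring
    rw [key, coeff_add, coeff_add, low_mul_X (ih t h3) i α hα, coeff_C_mul, coeff_C_mul,
      ih t h3 α (by omega), coeff_monomial, if_neg]
    · simp
    · rintro rfl; omega

lemma twT_top (P : MvPolynomial ι K) (d : ℕ) (hd : ∀ β, d < β.degree → coeff β P = 0)
    (α : ι →₀ ℕ) (hα : d ≤ α.degree) : coeff α (twT σ r P) = σ (coeff α P) := by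
  classical
  have h1 : twT σ r P - map σ P =
      ∑ s ∈ P.support, C (σ (coeff s P)) * (twT σ r (monomial s 1) - monomial s 1) := by
    conv_lhs => rw [P.as_sum]
    rw [map_sum, map_sum, ← Finset.sum_sub_distrib]
    refine Finset.sum_congr rfl fun s _ => ?_
    have : monomial s (coeff s P) = C (coeff s P) * monomial s 1 := by
      rw [C_mul_monomial, mul_one]
    rw [this, map_mul, map_mul, twT_C, map_C, map_monomial, map_one σ]; ring
  have h2 : coeff α (twT σ r P - map σ P) = 0 := by
    rw [h1, coeff_sum]
    refine Finset.sum_eq_zero fun s hs => ?_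
    rw [coeff_C_mul, twT_monomial_one σ r _ s rfl α, mul_zero]
    by_contra hc
    exact (mem_support_iff.mp hs) (hd s (by omega))
  rw [coeff_sub, coeff_map, sub_eq_zero] at h2
  exact h2

lemma const_of_pderiv_s13 [CharZero K] (P : MvPolynomial ι K) (h : ∀ i, pderiv i P = 0) :
    P = C (coeff 0 P) := by
  classical
  ext s
  rw [coeff_C]
  split_ifs with hs
  · rw [hs]
  · obtain ⟨i, hi⟩ := Finsupp.support_nonempty_iff.mpr (Ne.symm hs)
    have h1 : (s - Finsupp.single i 1) + Finsupp.single i 1 = s :=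
      Finsupp.sub_add_single_one_cancel (Finsupp.mem_support_iff.mp hi)
    have h2 := coeff_pderiv (i := i) P (s - Finsupp.single i 1)
    rw [h1, h i, coeff_zero] at h2
    rcases mul_eq_zero.mp h2.symm with h3 | h3
    · exact h3
    · exact absurd h3 (Nat.cast_add_one_ne_zero _)

lemma fixed_const [CharZero K] [Fintype ι]
    (hyp : ∀ (c : ι → K) (g : K), (∀ i, σ (c i) = c i) → σ g + ∑ i, c i * r i = g → c = 0)
    (n : ℕ) : ∀ P : MvPolynomial ι K, (∀ β, n ≤ β.degree → coeff β P = 0) →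
      twT σ r P = P → ∃ a, P = C a := by
  classical
  induction n with
  | zero =>
    intro P hP _
    refine ⟨0, ?_⟩
    ext s; simpa using hP s (Nat.zero_le _)
  | succ n ih =>
    intro P hP hT
    have h1 : ∀ i, ∃ a, pderiv i P = C a := by
      intro i
      apply ih
      · intro β hβ
        rw [coeff_pderiv, hP, zero_mul]
        rw [map_add, Finsupp.degree_single]; omega
      · rw [← twT_pderiv, hT]
    choose c hc using h1
    have hσ : ∀ i, σ (c i) = c i := by
      intro i
      have := twT_pderiv σ r i P
      rw [hT, hc, twT_C] at this
      exact (C_injective _ _ this).symm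
    have h2 := const_of_pderiv_s13 (P - ∑ i, C (c i) * X i) (by
      intro i
      simp [hc, Pi.single_apply])
    set a := coeff 0 (P - ∑ i, C (c i) * X i)
    have h3 : P = C a + ∑ i, C (c i) * X i := by rw [← h2]; ring
    have h4 : twT σ r P = C (σ a + ∑ i, c i * r i) + ∑ i, C (c i) * X i := by
      rw [h3]
      simp only [map_add, map_sum, map_mul, twT_C, twT_X, hσ, mul_add, Finset.sum_add_distrib]
      ring
    rw [hT, h3] at h4
    have h5 : a = σ a + ∑ i, c i * r i := C_injective ι K (add_right_cancel h4)
    have h6 := hyp c a hσ h5.symm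
    exact ⟨a, by rw [h3, h6]; simp⟩

/-- A proper ideal stable under the twisted translation is zero. -/
lemma ideal_zero [CharZero K] [Fintype ι]
    (hyp : ∀ (c : ι → K) (g : K), (∀ i, σ (c i) = c i) → σ g + ∑ i, c i * r i = g → c = 0)
    (I : Ideal (MvPolynomial ι K)) (hI : I ≠ ⊤) (hT : ∀ P ∈ I, twT σ r P ∈ I)
    (P : MvPolynomial ι K) (hP : P ∈ I) : P = 0 := by
  classical
  by_contra hP0
  -- minimal degree bound
  have hex : ∃ d : ℕ, ∃ Q ∈ I, Q ≠ 0 ∧ ∀ β : ι →₀ ℕ, d < β.degree → coeff β Q = 0 := by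
    refine ⟨P.totalDegree, P, hP, hP0, fun β hβ => ?_⟩
    apply coeff_eq_zero_of_totalDegree_lt
    exact hβ
  have hmin : ∀ Q ∈ I, (∀ β : ι →₀ ℕ, Nat.find hex ≤ β.degree → coeff β Q = 0) → Q = 0 := by
    intro Q hQ h
    by_contra hQ0
    by_cases hd : Nat.find hex = 0
    · exact hQ0 (by ext s; simpa using h s (by omega))
    · refine Nat.find_min hex (m := Nat.find hex - 1) (by omega) ⟨Q, hQ, hQ0, fun β hβ => h β (by omega)⟩
  have hspec := Nat.find_spec hex
  set d := Nat.find hex with hd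
  -- minimal number of top terms
  have hex2 : ∃ k : ℕ, ∃ Q ∈ I, Q ≠ 0 ∧ (∀ β : ι →₀ ℕ, d < β.degree → coeff β Q = 0) ∧
      (Q.support.filter (fun β => β.degree = d)).card = k := by
    obtain ⟨Q, h1, h2, h3⟩ := hspec
    exact ⟨_, Q, h1, h2, h3, rfl⟩
  have hmin2 := fun m => Nat.find_min hex2 (m := m)
  obtain ⟨Q, hQ, hQ0, hQd, hk⟩ := Nat.find_spec hex2
  set k := Nat.find hex2
  have htop : ∃ α : ι →₀ ℕ, α.degree = d ∧ coeff α Q ≠ 0 := by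
    by_contra! hcon
    refine hQ0 (hmin Q hQ fun β hβ => ?_)
    rcases hβ.eq_or_lt with h | h
    · exact hcon β h.symm
    · exact hQd β h
  obtain ⟨α, hα, hαQ⟩ := htop
  set a := coeff α Q
  set M := C a⁻¹ * Q with hM
  have hMI : M ∈ I := I.mul_mem_left _ hQ
  have hMα : coeff α M = 1 := by rw [hM, coeff_C_mul]; exact inv_mul_cancel₀ hαQ
  have hMd : ∀ β : ι →₀ ℕ, d < β.degree → coeff β M = 0 := fun β hβ => by
    rw [hM, coeff_C_mul, hQd β hβ, mul_zero]
  have hfix : twT σ r M = M := by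
    by_contra hne
    refine hmin2 _ ?_ ⟨twT σ r M - M, I.sub_mem (hT M hMI) hMI, sub_ne_zero.mpr hne, ?_, rfl⟩
    · rw [← hk]
      apply Finset.card_lt_card
      rw [Finset.ssubset_iff_of_subset]
      · refine ⟨α, by simp [hα]; exact hαQ, ?_⟩
        simp [twT_top σ r M d hMd α hα.ge, hMα]
      · intro β
        simp only [Finset.mem_filter, mem_support_iff]
        rintro ⟨h1, h2⟩
        refine ⟨fun h0 => h1 ?_, h2⟩
        rw [coeff_sub, twT_top σ r M d hMd β h2.ge, hM, coeff_C_mul, h0]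
        simp
    · intro β hβ
      rw [coeff_sub, twT_top σ r M d hMd β hβ.le, hMd β hβ]; simp
  obtain ⟨b, hb⟩ := fixed_const σ r hyp (d + 1) M (fun β hβ => hMd β (by omega)) hfix
  apply hI
  have hb0 : b ≠ 0 := by
    rintro rfl
    rw [hb] at hMα; simp at hMα
  refine Ideal.eq_top_of_isUnit_mem I hMI ?_
  rw [hb]
  exact (isUnit_iff_ne_zero.mpr hb0).map C

end abstractPart
section ratPart
open Polynomial

lemma shift_inj : Function.Injective (compRingHom (X + 1 : ℂ[X])) := by
  rw [injective_iff_map_eq_zero]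
  intro p hp
  have h : p.comp (X + 1) = 0 := hp
  have h2 : (p.comp (X + 1)).comp (X - 1) = p := by
    rw [comp_assoc]; simp
  rw [← h2, h, zero_comp]

/-- The shift automorphism of the field of rational functions. -/
noncomputable def shiftK : RatFunc ℂ →+* RatFunc ℂ :=
  IsFractionRing.map shift_inj

lemma shiftK_alg (p : ℂ[X]) :
    shiftK (algebraMap ℂ[X] (RatFunc ℂ) p) = algebraMap ℂ[X] (RatFunc ℂ) (p.comp (X + 1)) := by
  unfold shiftK IsFractionRing.map
  rw [IsLocalization.map_eq]; rfl

lemma no_up (q : ℂ[X]) (hq : q ≠ 0) (a : ℂ) (h : ∀ n : ℕ, q.eval (a + n) = 0) : False := by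
  apply hq
  apply q.eq_zero_of_infinite_isRoot
  refine (Set.infinite_range_of_injective (f := fun n : ℕ => a + (n : ℂ)) ?_).mono ?_
  · intro m n h; simpa using h
  · rintro _ ⟨n, rfl⟩; exact h n

lemma no_down (q : ℂ[X]) (hq : q ≠ 0) (a : ℂ) (h : ∀ n : ℕ, q.eval (a - n) = 0) : False := by
  apply hq
  apply q.eq_zero_of_infinite_isRoot
  refine (Set.infinite_range_of_injective (f := fun n : ℕ => a - (n : ℂ)) ?_).mono ?_
  · intro m n h; simpa using h
  · rintro _ ⟨n, rfl⟩; exact h n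

lemma coprime_eval {p q : ℂ[X]} (h : IsCoprime p q) (a : ℂ) (hq : q.eval a = 0) :
    p.eval a ≠ 0 := by
  intro hp
  obtain ⟨u, v, huv⟩ := h
  have := congrArg (eval a) huv
  simp [hp, hq] at this

/-- Clearing denominators. -/
lemma clear_denom (g : RatFunc ℂ) (h m : ℂ[X]) (hm : m ≠ 0)
    (hg : algebraMap ℂ[X] (RatFunc ℂ) h / algebraMap ℂ[X] (RatFunc ℂ) m = shiftK g - g) :
    h * (g.denom * g.denom.comp (X + 1)) =
      m * (g.num.comp (X + 1) * g.denom - g.num * g.denom.comp (X + 1)) := by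
  have hq : g.denom ≠ 0 := g.denom_ne_zero
  have hq' : g.denom.comp (X + 1) ≠ 0 := fun h0 => hq (by
    apply shift_inj; rw [map_zero]; exact h0)
  have hg1 : shiftK g - g = algebraMap ℂ[X] (RatFunc ℂ) (g.num.comp (X + 1)) /
      algebraMap ℂ[X] (RatFunc ℂ) (g.denom.comp (X + 1)) -
      algebraMap ℂ[X] (RatFunc ℂ) g.num / algebraMap ℂ[X] (RatFunc ℂ) g.denom := by
    rw [← shiftK_alg, ← shiftK_alg, ← map_div₀, g.num_div_denom]
  rw [hg1] at hg
  apply RatFunc.algebraMap_injective ℂ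
  have e1 := RatFunc.algebraMap_ne_zero hq
  have e2 := RatFunc.algebraMap_ne_zero hq'
  have e3 := RatFunc.algebraMap_ne_zero hm
  simp only [map_mul, map_sub]
  field_simp at hg
  linear_combination hg

lemma fixed_is_const (c : RatFunc ℂ) (hc : shiftK c = c) :
    ∃ a : ℂ, c = algebraMap ℂ[X] (RatFunc ℂ) (C a) := by
  have h := clear_denom c 0 1 one_ne_zero (by rw [hc]; simp)
  rw [zero_mul, one_mul] at h
  have hcop := c.isCoprime_num_denom
  have hq := c.denom_ne_zero
  have step : ∀ a, c.denom.eval a = 0 → c.denom.eval (a + 1) = 0 := by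
    intro a ha
    have h1 := congrArg (eval a) h
    simp [ha, coprime_eval hcop a ha] at h1
    exact h1
  have hdeg : c.denom.degree = 0 := by
    by_contra hd
    obtain ⟨a, ha⟩ := IsAlgClosed.exists_root c.denom hd
    refine no_up _ hq a fun n => ?_
    induction n with
    | zero => simpa using ha
    | succ n ih => have := step _ ih; push_cast; rwa [← add_assoc]
  have h1 : c.denom = 1 := (c.monic_denom).degree_le_zero_iff_eq_one.mp hdeg.le
  rw [h1] at h
  have h2 : ∀ a, c.num.eval (a + 1) = c.num.eval a := by
    intro a
    have h1 := congrArg (eval a) h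
    simp at h1
    linear_combination -h1
  refine ⟨c.num.eval 0, ?_⟩
  have h3 : c.num = C (c.num.eval 0) := by
    by_contra hne
    refine no_up (c.num - C (c.num.eval 0)) (sub_ne_zero.mpr hne) 0 fun n => ?_
    induction n with
    | zero => simp
    | succ n ih =>
      push_cast; rw [← add_assoc]
      simp only [eval_sub, eval_C] at ih ⊢
      rw [h2]; exact ih
  rw [← h3]
  conv_lhs => rw [← c.num_div_denom, h1]
  simp

lemma pole_contra (g : RatFunc ℂ) (h : ℂ[X]) (M : ℕ)
    (hg : algebraMap ℂ[X] (RatFunc ℂ) h / algebraMap ℂ[X] (RatFunc ℂ) (X ^ M) = shiftK g - g) :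
    X ^ M ∣ h := by
  have H := clear_denom g h (X ^ M) (pow_ne_zero _ X_ne_zero) hg
  have hcop := g.isCoprime_num_denom
  have hq := g.denom_ne_zero
  have up : ∀ a, a ≠ 0 → g.denom.eval a = 0 → g.denom.eval (a + 1) = 0 := by
    intro a ha0 ha
    have h1 := congrArg (eval a) H
    simp [ha, ha0, coprime_eval hcop a ha] at h1
    exact h1
  have down : ∀ a, a ≠ 0 → g.denom.eval (a + 1) = 0 → g.denom.eval a = 0 := by
    intro a ha0 ha
    have h1 := congrArg (eval a) H
    simp [ha, ha0, coprime_eval hcop _ ha] at h1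
    exact h1
  have n0 : g.denom.eval 0 ≠ 0 := by
    intro h0
    refine no_down _ hq 0 fun n => ?_
    induction n with
    | zero => simpa using h0
    | succ n ih =>
      apply down
      · rw [zero_sub, neg_ne_zero]; exact Nat.cast_ne_zero.mpr (Nat.succ_ne_zero n)
      · have e : (0 : ℂ) - ((n + 1 : ℕ) : ℂ) + 1 = 0 - (n : ℂ) := by push_cast; ring
        rw [e]; exact ih
  have n1 : g.denom.eval 1 ≠ 0 := by
    intro h0
    refine no_up _ hq 1 fun n => ?_
    induction n with
    | zero => simpa using h0
    | succ n ih =>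
      have := up _ (by rw [add_comm]; exact Nat.cast_add_one_ne_zero n) ih
      push_cast; rwa [← add_assoc]
  have hd : X ^ M ∣ h * (g.denom * g.denom.comp (X + 1)) := ⟨_, H⟩
  refine IsCoprime.dvd_of_dvd_mul_right (IsCoprime.pow_left ?_) hd
  rw [Polynomial.irreducible_X.coprime_iff_not_dvd, X_dvd_iff, coeff_zero_eq_eval_zero]
  simp [n0, n1]

lemma rat_hyp (N : ℕ) (k : Fin (N + 1) → ℂ) (hk : ∀ i, k i ≠ 0)
    (c : Fin (N + 1) → RatFunc ℂ) (g : RatFunc ℂ) (hc : ∀ i, shiftK (c i) = c i)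
    (hg : shiftK g + ∑ i, c i * (algebraMap ℂ[X] (RatFunc ℂ) (C (k i)) /
      algebraMap ℂ[X] (RatFunc ℂ) (X ^ (i.val + 2))) = g) : c = 0 := by
  choose a ha using fun i => fixed_is_const (c i) (hc i)
  have hX : algebraMap ℂ[X] (RatFunc ℂ) X ≠ 0 := RatFunc.algebraMap_ne_zero X_ne_zero
  have hdvd := pole_contra (-g) (∑ i : Fin (N + 1), C (a i * k i) * X ^ (N - i.val)) (N + 2) (by
    have e : shiftK (-g) - (-g) = ∑ i, c i * (algebraMap ℂ[X] (RatFunc ℂ) (C (k i)) /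
      algebraMap ℂ[X] (RatFunc ℂ) (X ^ (i.val + 2))) := by
      rw [map_neg]; linear_combination -hg
    rw [e, map_sum, Finset.sum_div]
    refine Finset.sum_congr rfl fun i _ => ?_
    have : N + 2 = (N - i.val) + (i.val + 2) := by have := i.isLt; omega
    rw [ha i, this]
    simp only [map_mul, map_pow]
    rw [pow_add]
    field_simp)
  rw [X_pow_dvd_iff] at hdvd
  ext j
  have h1 := hdvd (N - j.val) (by omega)
  simp only [finsetSum_coeff, coeff_C_mul, coeff_X_pow] at h1
  rw [Finset.sum_eq_single j] at h1
  · simp [hk j] at h1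
    rw [ha j, h1]; simp
  · intro i _ hij
    rw [if_neg, mul_zero]
    intro h
    apply hij; ext
    have := i.isLt; have := j.isLt; omega
  · simp
end ratPart
section anaPart
open Filter Topology

lemma H_diff (H : ℂ → ℂ)
    (hdef : ∀ z : ℂ, (∀ k : ℕ, z ≠ -(k : ℂ)) → H z = ∑' n : ℕ, 1 / ((n : ℂ) + z) ^ 2) :
    DifferentiableOn ℂ H {z : ℂ | 1 / 2 < z.re} ∧
    ∀ z : ℂ, 1 / 2 < z.re → H (z + 1) = H z - z ^ (-2 : ℤ) := by
  have hne : ∀ z : ℂ, 1 / 2 < z.re → ∀ k : ℕ, z ≠ -(k : ℂ) := by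
    intro z hz k h
    have := congrArg Complex.re h
    simp at this
    have h2 : (0 : ℝ) ≤ k := Nat.cast_nonneg k
    linarith
  have hsum : Summable (fun n : ℕ => 1 / ((n : ℝ) + 1 / 2) ^ 2) := by
    have := (Real.summable_one_div_nat_add_rpow (1 / 2) 2).mpr (by norm_num)
    refine this.congr fun n => ?_
    rw [abs_of_nonneg (by positivity)]
    norm_num
  have hbd : ∀ (n : ℕ) (w : ℂ), 1 / 2 < w.re →
      ‖1 / ((n : ℂ) + w) ^ 2‖ ≤ 1 / ((n : ℝ) + 1 / 2) ^ 2 := by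
    intro n w hw
    rw [norm_div, norm_one, norm_pow]
    have h1 : (n : ℝ) + 1 / 2 ≤ ‖(n : ℂ) + w‖ := by
      refine le_trans ?_ (Complex.re_le_norm _)
      simp; linarith
    gcongr
  refine ⟨?_, ?_⟩
  · have := Complex.differentiableOn_tsum_of_summable_norm (U := {z : ℂ | 1 / 2 < z.re})
      (F := fun (n : ℕ) (w : ℂ) => 1 / ((n : ℂ) + w) ^ 2) hsum ?_
      (isOpen_lt continuous_const Complex.continuous_re) (fun n w hw => hbd n w hw)
    · exact this.congr fun z hz => hdef z (hne z hz)
    · intro n z hz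
      have h0 : (n : ℂ) + z ≠ 0 := fun h => hne z hz n (by linear_combination h)
      apply DifferentiableAt.differentiableWithinAt
      fun_prop (disch := exact pow_ne_zero 2 h0)
  · intro z hz
    have hz1 : 1 / 2 < (z + 1).re := by simp; linarith
    rw [hdef _ (hne _ hz1), hdef _ (hne _ hz)]
    have hs : Summable (fun n : ℕ => 1 / ((n : ℂ) + z) ^ 2) :=
      Summable.of_norm_bounded hsum fun n => hbd n z hz
    rw [hs.tsum_eq_zero_add]
    have : ∀ n : ℕ, 1 / ((n : ℂ) + (z + 1)) ^ 2 = 1 / (((n + 1 : ℕ) : ℂ) + z) ^ 2 := by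
      intro n; push_cast; ring_nf
    simp_rw [this]
    simp [zpow_neg]

/-- constants -/
noncomputable def kk (j : ℕ) : ℂ := -∏ i ∈ Finset.range j, (((-2 : ℤ) : ℂ) - i)

lemma kk_ne (j : ℕ) : kk j ≠ 0 := by
  unfold kk
  rw [neg_ne_zero, Finset.prod_ne_zero_iff]
  intro i _ h
  have : ((i + 2 : ℕ) : ℂ) = 0 := by push_cast at h ⊢; linear_combination -h
  exact absurd this (Nat.cast_ne_zero.mpr (by omega))

lemma H_iter (H : ℂ → ℂ)
    (hdef : ∀ z : ℂ, (∀ k : ℕ, z ≠ -(k : ℂ)) → H z = ∑' n : ℕ, 1 / ((n : ℂ) + z) ^ 2)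
    (j n : ℕ) (hn : 1 ≤ n) :
    iteratedDeriv j H ((n : ℂ) + 1) = iteratedDeriv j H n + kk j / (n : ℂ) ^ (j + 2) := by
  obtain ⟨h1, h2⟩ := H_diff H hdef
  have hU : IsOpen {z : ℂ | 1 / 2 < z.re} := isOpen_lt continuous_const Complex.continuous_re
  have hnU : (n : ℂ) ∈ {z : ℂ | 1 / 2 < z.re} := by
    have : (1 : ℝ) ≤ n := by exact_mod_cast hn
    simp; linarith
  have hnh := hU.mem_nhds hnU
  have ev : (fun z => H (z + 1)) =ᶠ[𝓝 (n : ℂ)] (fun z => H z - z ^ (-2 : ℤ)) := by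
    filter_upwards [hnh] with z hz using h2 z hz
  have h3 := (ev.iteratedDeriv j).self_of_nhds
  have n0 : (n : ℂ) ≠ 0 := Nat.cast_ne_zero.mpr (by omega)
  have ca : ContDiffAt ℂ j H n := (h1.analyticAt hnh).contDiffAt
  have cb : ContDiffAt ℂ j (fun z : ℂ => z ^ (-2 : ℤ)) n :=
    (AnalyticAt.zpow analyticAt_id n0).contDiffAt
  rw [iteratedDeriv_comp_add_const] at h3
  have h4 := iteratedDeriv_sub ca cb
  have h5 : iteratedDeriv j (fun z => H z - z ^ (-2 : ℤ)) (n : ℂ) =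
    iteratedDeriv j H n - iteratedDeriv j (fun z : ℂ => z ^ (-2 : ℤ)) n := h4
  have h6 : iteratedDeriv j (fun z : ℂ => z ^ (-2 : ℤ)) n = - (kk j / (n : ℂ) ^ (j + 2)) := by
    rw [iteratedDeriv_eq_iterate, iter_deriv_zpow, kk]
    have : ((-2 : ℤ) - j) = -((j + 2 : ℕ) : ℤ) := by push_cast; ring
    rw [this, zpow_neg, zpow_natCast]
    field_simp
    try ring
  rw [h5, h6] at h3
  rw [sub_neg_eq_add] at h3
  exact h3
end anaPart

section finalPart
open Filter Topology

/-- Germs of sequences at infinity. -/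
abbrev SeqGerm : Type := Filter.Germ (atTop : Filter ℕ) ℂ

/-- The shift of germs of sequences. -/
noncomputable def shiftG : SeqGerm →+* SeqGerm where
  toFun f := f.compTendsto (fun n => n + 1) (tendsto_add_atTop_nat 1)
  map_one' := rfl
  map_zero' := rfl
  map_mul' f g := Filter.Germ.inductionOn₂ f g fun _ _ => rfl
  map_add' f g := Filter.Germ.inductionOn₂ f g fun _ _ => rfl

lemma shiftG_coe (f : ℕ → ℂ) :
    shiftG (Filter.Germ.coeRingHom atTop f) = Filter.Germ.coeRingHom atTop (fun n => f (n + 1)) :=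
  rfl

/-- Evaluate a polynomial along the natural numbers. -/
noncomputable def evG : Polynomial ℂ →+* SeqGerm :=
  (Filter.Germ.coeRingHom atTop).comp
    (RingHom.pi fun n : ℕ => Polynomial.evalRingHom (n : ℂ))

lemma evG_apply (p : Polynomial ℂ) :
    evG p = Filter.Germ.coeRingHom atTop (fun n : ℕ => p.eval (n : ℂ)) := rfl

lemma evG_unit (p : Polynomial ℂ) (hp : p ≠ 0) : IsUnit (evG p) := by
  refine IsUnit.of_mul_eq_one
    (Filter.Germ.coeRingHom atTop (fun n : ℕ => (p.eval (n : ℂ))⁻¹)) ?_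
  rw [evG_apply, ← map_mul, ← map_one (Filter.Germ.coeRingHom atTop)]
  refine Filter.Germ.coe_eq.mpr ?_
  have hfin : {n : ℕ | p.eval (n : ℂ) = 0}.Finite := by
    have h1 : {z : ℂ | p.IsRoot z}.Finite := by
      by_contra h
      exact hp (p.eq_zero_of_infinite_isRoot h)
    exact h1.preimage (f := fun n : ℕ => (n : ℂ)) Nat.cast_injective.injOn
  have := hfin.compl_mem_cofinite
  rw [Nat.cofinite_eq_atTop] at this
  filter_upwards [this] with n hn
  exact mul_inv_cancel₀ hn

/-- Evaluate a rational function along the natural numbers. -/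
noncomputable def evK : RatFunc ℂ →+* SeqGerm :=
  IsLocalization.lift (M := nonZeroDivisors (Polynomial ℂ)) (g := evG)
    fun p => evG_unit p.1 (nonZeroDivisors.ne_zero p.2)

lemma evK_alg (p : Polynomial ℂ) : evK (algebraMap _ _ p) = evG p :=
  IsLocalization.lift_eq _ p

lemma shiftG_evK (g : RatFunc ℂ) : shiftG (evK g) = evK (shiftK g) := by
  have : shiftG.comp evK = evK.comp shiftK := by
    apply IsLocalization.ringHom_ext (nonZeroDivisors (Polynomial ℂ))
    refine RingHom.ext fun p => ?_
    simp only [RingHom.comp_apply, evK_alg, shiftK_alg, evG_apply, shiftG_coe]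
    simp
  exact RingHom.congr_fun this g

lemma evK_r (k : ℂ) (m : ℕ) :
    evK (algebraMap (Polynomial ℂ) (RatFunc ℂ) (Polynomial.C k) /
      algebraMap (Polynomial ℂ) (RatFunc ℂ) (Polynomial.X ^ m)) =
      Filter.Germ.coeRingHom atTop (fun n : ℕ => k / (n : ℂ) ^ m) := by
  have hX : (Polynomial.X ^ m : Polynomial ℂ) ≠ 0 := pow_ne_zero _ Polynomial.X_ne_zero
  apply (evG_unit _ hX).mul_right_cancel
  rw [← evK_alg, ← map_mul, div_mul_cancel₀ _ (RatFunc.algebraMap_ne_zero hX), evK_alg, evK_alg,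
    evG_apply, evG_apply, ← map_mul]
  refine Filter.Germ.coe_eq.mpr ?_
  filter_upwards [eventually_ge_atTop 1] with n hn
  have n0 : (n : ℂ) ≠ 0 := Nat.cast_ne_zero.mpr (by omega)
  simp [n0]

end finalPart

theorem trigamma_diffTranscendental (H₁ : ℂ → ℂ)
    (hmero : MeromorphicOn H₁ Set.univ)
    (hdef : ∀ z : ℂ, (∀ k : ℕ, z ≠ -(k : ℂ)) →
      H₁ z = ∑' n : ℕ, 1 / ((n : ℂ) + z) ^ 2) :
    ¬ ∃ (N : ℕ) (P : MvPolynomial (Fin (N + 2)) ℂ),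
      P ≠ 0 ∧ ∀ z : ℂ, (∀ k : ℕ, z ≠ -(k : ℂ)) →
        MvPolynomial.eval
          (fun i : Fin (N + 2) =>
            if i.val = 0 then z else iteratedDeriv (i.val - 1) H₁ z) P = 0 := by
  rintro ⟨N, P, hP, hvan⟩
  let r : Fin (N + 1) → RatFunc ℂ := fun i =>
    algebraMap (Polynomial ℂ) (RatFunc ℂ) (Polynomial.C (kk i.val)) /
      algebraMap (Polynomial ℂ) (RatFunc ℂ) (Polynomial.X ^ (i.val + 2))
  let y : Fin (N + 1) → SeqGerm := fun i =>
    Filter.Germ.coeRingHom Filter.atTop (fun n : ℕ => iteratedDeriv i.val H₁ (n : ℂ))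
  let Ψ : MvPolynomial (Fin (N + 1)) (RatFunc ℂ) →+* SeqGerm := MvPolynomial.eval₂Hom evK y
  have hy : ∀ i, shiftG (y i) = y i + evK (r i) := by
    intro i
    simp only [y, r]
    rw [shiftG_coe, evK_r, ← map_add]
    refine Filter.Germ.coe_eq.mpr ?_
    filter_upwards [Filter.eventually_ge_atTop 1] with n hn
    have := H_iter H₁ hdef i.val n hn
    push_cast
    exact this
  have hcomm : Ψ.comp (twT shiftK r) = shiftG.comp Ψ := by
    apply MvPolynomial.ringHom_ext
    · intro a
      simp [twT_C, Ψ, shiftG_evK]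
    · intro i
      simp [twT_X, Ψ, hy]
  let Φ : MvPolynomial (Fin (N + 2)) ℂ →+* MvPolynomial (Fin (N + 1)) (RatFunc ℂ) :=
    ((MvPolynomial.map (algebraMap (Polynomial ℂ) (RatFunc ℂ))).comp
      (MvPolynomial.optionEquivRight ℂ (Fin (N + 1))).toAlgHom.toRingHom).comp
      (MvPolynomial.rename (finSuccEquiv (N + 1))).toRingHom
  have hΦinj : Function.Injective Φ := by
    refine ((MvPolynomial.map_injective _ (RatFunc.algebraMap_injective ℂ)).comp
      (MvPolynomial.optionEquivRight ℂ (Fin (N + 1))).injective).comp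
      (MvPolynomial.rename_injective _ (finSuccEquiv (N + 1)).injective)
  let pt : ℕ → Fin (N + 2) → ℂ := fun n i =>
    if i.val = 0 then (n : ℂ) else iteratedDeriv (i.val - 1) H₁ n
  have hΨΦ : Ψ.comp Φ = (Filter.Germ.coeRingHom Filter.atTop).comp
      (RingHom.pi fun n : ℕ => MvPolynomial.eval (pt n)) := by
    apply MvPolynomial.ringHom_ext
    · intro a
      have h1 : Φ (MvPolynomial.C a) = MvPolynomial.C (algebraMap _ _ (Polynomial.C a)) := by
        simp [Φ]
      rw [RingHom.comp_apply, h1]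
      simp only [Ψ, MvPolynomial.eval₂Hom_C, evK_alg, evG_apply]
      simp only [RingHom.comp_apply]
      congr 1
      ext n
      change _ = MvPolynomial.eval (pt n) _
      simp
    · intro i
      refine Fin.cases ?_ (fun j => ?_) i
      · have h1 : Φ (MvPolynomial.X 0) = 
            MvPolynomial.C (algebraMap (Polynomial ℂ) (RatFunc ℂ) Polynomial.X) := by
          simp [Φ, MvPolynomial.optionEquivRight_X_none]
        rw [RingHom.comp_apply, h1]
        simp only [Ψ, MvPolynomial.eval₂Hom_C, evK_alg, evG_apply]
        simp only [RingHom.comp_apply]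
        congr 1
        ext n
        change _ = MvPolynomial.eval (pt n) _
        simp [pt]
      · have h1 : Φ (MvPolynomial.X j.succ) = MvPolynomial.X j := by
          simp [Φ]
        rw [RingHom.comp_apply, h1]
        simp only [Ψ, MvPolynomial.eval₂Hom_X', y]
        simp only [RingHom.comp_apply]
        congr 1
        ext n
        change _ = MvPolynomial.eval (pt n) _
        simp [pt]
  have hker : Φ P ∈ RingHom.ker Ψ := by
    rw [RingHom.mem_ker, ← RingHom.comp_apply, hΨΦ, RingHom.comp_apply,
      ← map_zero (Filter.Germ.coeRingHom Filter.atTop)]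
    refine Filter.Germ.coe_eq.mpr ?_
    filter_upwards [Filter.eventually_ge_atTop 1] with n hn
    refine hvan n fun k hk => ?_
    have h2 : ((n + k : ℕ) : ℂ) = 0 := by push_cast; linear_combination hk
    have := Nat.cast_eq_zero.mp h2
    omega
  have hz : Φ P = 0 := by
    refine ideal_zero shiftK r (fun c g hc hg => ?_) (RingHom.ker Ψ) (RingHom.ker_ne_top Ψ)
      (fun Q hQ => ?_) _ hker
    · exact rat_hyp N (fun i => kk i.val) (fun i => kk_ne _) c g hc hg
    · rw [RingHom.mem_ker] at hQ ⊢
      rw [← RingHom.comp_apply, hcomm, RingHom.comp_apply, hQ, map_zero]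
  exact hP (hΦinj (by rw [hz, map_zero]))
end

section
/- Every function K : ℂ → ℂ meromorphic on ℂ satisfying the functional equation K(z) − K(z−1) = Γ(z) for every z ∈ ℂ at which K(z), K(z−1), and Γ(z) are all analytic, is differentially transcendental. In particular, Kurepa's function, the meromorphic continuation of K(z) = ∫₀^∞ e^{−t} (t^z − 1)/(t − 1) dt, is differentially transcendental. -/
open Algebra in
theorem kur_deriv_alg {F R : Type*} [Field F] [CharZero F] [CommRing R] [IsDomain R] [Algebra F R]
    (D : Derivation F R R) (s : Set R) (hs : ∀ a ∈ s, IsAlgebraic (adjoin F s) (D a)) (a : R)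
    (ha : IsAlgebraic (adjoin F s) a) : IsAlgebraic (adjoin F s) (D a) := by
  have hS : ∀ b ∈ adjoin F s, IsAlgebraic (adjoin F s) (D b) := by
    intro b hb
    induction hb using Algebra.adjoin_induction with
    | mem x hx => exact hs x hx
    | algebraMap r => simpa using isAlgebraic_zero
    | add x y hx hy h1 h2 => rw [map_add]; exact h1.add h2
    | mul x y hx hy h1 h2 =>
      rw [D.leibniz, smul_eq_mul, smul_eq_mul]
      exact ((isAlgebraic_algebraMap (⟨x, hx⟩ : adjoin F s)).mul h2).add
        ((isAlgebraic_algebraMap (⟨y, hy⟩ : adjoin F s)).mul h1)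
  have key : ∀ p : Polynomial (adjoin F s), ∃ e : R, IsAlgebraic (adjoin F s) e ∧
      D (Polynomial.aeval a p) = e + Polynomial.aeval a p.derivative * D a := by
    intro p
    induction p using Polynomial.induction_on' with
    | add p q hp hq =>
      obtain ⟨e, he, h1⟩ := hp
      obtain ⟨f, hf, h2⟩ := hq
      refine ⟨e + f, he.add hf, ?_⟩
      simp only [map_add, h1, h2]
      ring
    | monomial n c =>
      refine ⟨a ^ n * D (c : R), (ha.pow n).mul (hS c c.2), ?_⟩
      rw [Polynomial.derivative_monomial, Polynomial.aeval_monomial, Polynomial.aeval_monomial,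
        D.leibniz, D.leibniz_pow]
      simp only [smul_eq_mul, nsmul_eq_mul, map_mul, map_natCast]
      change (c : R) * _ + _ * D (c : R) = _ + (c : R) * _ * _ * _
      ring
  classical
  have hex : ∃ n, ∃ p : Polynomial (adjoin F s), p ≠ 0 ∧ Polynomial.aeval a p = 0 ∧ p.natDegree = n := by
    obtain ⟨p, h1, h2⟩ := ha
    exact ⟨_, p, h1, h2, rfl⟩
  obtain ⟨p, hp0, hpa, hpn⟩ := Nat.find_spec hex
  have hmin := fun m => Nat.find_min hex (m := m)
  rw [← hpn] at hmin
  have hinj : Function.Injective (algebraMap (adjoin F s) R) := Subtype.val_injective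
  have : CharZero (adjoin F s) := charZero_of_injective_algebraMap (algebraMap F (adjoin F s)).injective
  have hdeg : p.natDegree ≠ 0 := by
    intro h
    rw [Polynomial.eq_C_of_natDegree_eq_zero h, Polynomial.aeval_C] at hpa
    have : p.coeff 0 = 0 := hinj (by simpa using hpa)
    apply hp0
    rw [Polynomial.eq_C_of_natDegree_eq_zero h, this, map_zero]
  have hd0 : p.derivative ≠ 0 := by
    intro h
    exact hdeg (Polynomial.derivative_eq_zero.1 h)
  have hne : Polynomial.aeval a p.derivative ≠ 0 := by
    intro h
    exact hmin _ (Polynomial.natDegree_derivative_lt hdeg) ⟨_, hd0, h, rfl⟩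
  obtain ⟨e, he, h1⟩ := key p
  rw [hpa, map_zero] at h1
  have h2 : Polynomial.aeval a p.derivative * D a = - e := by
    linear_combination -h1
  have halg : IsAlgebraic (adjoin F s) (Polynomial.aeval a p.derivative) := by
    have h3 : Polynomial.aeval a p.derivative ∈ adjoin (adjoin F s) {a} :=
      Polynomial.aeval_mem_adjoin_singleton _ _
    have h4 : adjoin (adjoin F s) {a} ≤ Subalgebra.algebraicClosure (adjoin F s) R :=
      Algebra.adjoin_le (Set.singleton_subset_iff.2 ha)
    exact h4 h3
  refine IsAlgebraic.of_mul (mem_nonZeroDivisors_of_ne_zero hne) halg ?_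
  rw [h2]; exact he.neg

open Algebra in
theorem kur_card {F R : Type*} [Field F] [CommRing R] [IsDomain R] [Algebra F R]
    (s : Set R) (hs : s.Finite) {ι : Type*} [Fintype ι] (x : ι → R) (hx : ∀ i, IsAlgebraic (adjoin F s) (x i))
    (hc : s.ncard < Fintype.card ι) : ¬ AlgebraicIndependent F x := by
  intro h
  have hI : (AlgebraicIndependent.matroid F R).Indep (Set.range x) :=
    AlgebraicIndependent.matroid_indep_iff.2 h.coe_range
  have hcl : Set.range x ⊆ (AlgebraicIndependent.matroid F R).closure s := by
    rw [AlgebraicIndependent.matroid_closure_eq]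
    rintro _ ⟨i, rfl⟩
    exact hx i
  have h1 := hI.encard_le_eRk_of_subset hcl
  rw [Matroid.eRk_closure_eq] at h1
  have h2 := h1.trans (Matroid.eRk_le_encard _ s)
  have h3 : (Set.range x).encard = Fintype.card ι := by
    rw [← Set.image_univ, h.injective.encard_image, Set.encard_univ]; simp
  rw [h3, ← hs.cast_ncard_eq] at h2
  have : Fintype.card ι ≤ s.ncard := by exact_mod_cast h2
  omega

open Algebra in
theorem kur_exists {F R : Type*} [Field F] [CommRing R] [IsDomain R] [Algebra F R]
    (x : ℕ → R) (m : ℕ) (hx : ¬ AlgebraicIndependent F (fun i : Fin m => x i)) :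
    ∃ n, IsAlgebraic (adjoin F (x '' Set.Iio n)) (x n) := by
  by_contra! hcon
  apply hx
  have h : ∀ n, AlgebraicIndepOn F x (Set.Iio n) := by
    intro n
    induction n with
    | zero =>
      have : IsEmpty (Set.Iio (0:ℕ)) := by simp
      exact (algebraicIndependent_empty_type_iff).2 (algebraMap F R).injective
    | succ n ih =>
      have := (AlgebraicIndepOn.insert_iff (R := F) (x := x) (s := Set.Iio n) (i := n) (by simp)).2 ⟨ih, hcon n⟩
      convert this using 1
      ext; simp
  exact (h m).comp (fun i : Fin m => (⟨i, i.2⟩ : Set.Iio m)) (fun i j hij =>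
    Fin.ext (congrArg Subtype.val hij))

open Algebra in
theorem kur_adjoin_mono {F R : Type*} [Field F] [CommRing R] [IsDomain R] [Algebra F R]
    {s t : Set R} (h : s ⊆ t) {a : R} (ha : IsAlgebraic (adjoin F s) a) :
    IsAlgebraic (adjoin F t) a :=
  ha.adjoin_of_forall_isAlgebraic (fun x hx => absurd (h hx.1) hx.2)

/-- the sequence of z followed by the iterated derivatives of k -/
def kurSeq {R : Type*} (D : R → R) (z k : R) (j : ℕ) : R := if j = 0 then z else D^[j - 1] k

open Algebra in
theorem kur_gen {F R : Type*} [Field F] [CommRing R] [IsDomain R] [Algebra F R]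
    (D : Derivation F R R) (z k : R) (hz : Transcendental F z) (hDz : D z = 1) (m : ℕ)
    (hk : ¬ AlgebraicIndependent F (fun i : Fin m => kurSeq D z k i)) :
    ∃ s : Set R, s.Finite ∧ z ∈ s ∧ IsAlgebraic (adjoin F s) k ∧
      ∀ a ∈ s, IsAlgebraic (adjoin F s) (D a) := by
  obtain ⟨n, hn⟩ := kur_exists _ m hk
  rcases n with _ | n
  · exfalso
    have : Set.Iio (0:ℕ) = ∅ := by ext; simp
    rw [this, Set.image_empty, Algebra.adjoin_empty] at hn
    apply hz
    simp only [kurSeq, if_true] at hn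
    have hal : Algebra.IsAlgebraic F (⊥ : Subalgebra F R) := by
      constructor
      rintro ⟨x, hx⟩
      obtain ⟨c, rfl⟩ := Algebra.mem_bot.1 hx
      exact isAlgebraic_algebraMap (A := (⊥ : Subalgebra F R)) c
    exact hn.restrictScalars F
  refine ⟨kurSeq D z k '' Set.Iio (n+1), (Set.finite_Iio _).image _, ⟨0, by simp, rfl⟩, ?_, ?_⟩
  · rcases n with _ | n
    · simpa [kurSeq] using hn
    · exact isAlgebraic_algebraMap (⟨k, subset_adjoin ⟨1, by simp, by simp [kurSeq]⟩⟩ :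
        adjoin F (kurSeq D z k '' Set.Iio (n+1+1)))
  · rintro _ ⟨j, hj, rfl⟩
    rcases j with _ | j
    · have : D (kurSeq D z k 0) = 1 := by simpa [kurSeq] using hDz
      rw [this]; exact isAlgebraic_one
    · have : D (kurSeq D z k (j+1)) = kurSeq D z k (j+2) := by
        simp [kurSeq, ← Function.iterate_succ_apply']
      rw [this]
      simp only [Set.mem_Iio] at hj
      rcases Nat.lt_or_ge (j+2) (n+1) with h | h
      · exact isAlgebraic_algebraMap (⟨_, subset_adjoin ⟨j+2, h, rfl⟩⟩ :
          adjoin F (kurSeq D z k '' Set.Iio (n+1)))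
      · have : j + 2 = n + 1 := by omega
        rw [this]; exact hn

open Algebra in
theorem kur_step1 {F R : Type*} [Field F] [CharZero F] [CommRing R] [IsDomain R] [Algebra F R]
    (D : Derivation F R R) (z k k1 p : R) (hz : Transcendental F z) (hDz : D z = 1) (m m1 : ℕ)
    (hk : ¬ AlgebraicIndependent F (fun i : Fin m => kurSeq D z k i))
    (hk1 : ¬ AlgebraicIndependent F (fun i : Fin m1 => kurSeq D z k1 i))
    (hne : k - k1 ≠ 0) (hp : (k - k1) * p = D (k - k1)) :
    ∃ N, ¬ AlgebraicIndependent F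
      (fun o : Option (Fin N) => o.elim z (fun i => D^[(i : ℕ)] p)) := by
  obtain ⟨s, hs, hzs, hks, hDs⟩ := kur_gen D z k hz hDz m hk
  obtain ⟨s1, hs1, hzs1, hks1, hDs1⟩ := kur_gen D z k1 hz hDz m1 hk1
  have hD := kur_deriv_alg D (s ∪ s1) (by
    rintro a (ha | ha)
    · exact kur_adjoin_mono Set.subset_union_left (hDs a ha)
    · exact kur_adjoin_mono Set.subset_union_right (hDs1 a ha))
  have h0 : IsAlgebraic (adjoin F (s ∪ s1)) (k - k1) :=
    (kur_adjoin_mono Set.subset_union_left hks).sub (kur_adjoin_mono Set.subset_union_right hks1)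
  have h1 : IsAlgebraic (adjoin F (s ∪ s1)) p := by
    refine IsAlgebraic.of_mul (mem_nonZeroDivisors_of_ne_zero hne) h0 ?_
    rw [hp]; exact hD _ h0
  have h2 : ∀ i : ℕ, IsAlgebraic (adjoin F (s ∪ s1)) (D^[i] p) := by
    intro i
    induction i with
    | zero => exact h1
    | succ i ih => rw [Function.iterate_succ_apply']; exact hD _ ih
  refine ⟨(s ∪ s1).ncard, kur_card (s ∪ s1) (hs.union hs1) _ ?_ (by simp)⟩
  rintro (_ | i)
  · exact isAlgebraic_algebraMap (⟨z, subset_adjoin (Or.inl hzs)⟩ : adjoin F (s ∪ s1))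
  · exact h2 i

section KurStepTwo
open MvPolynomial
open scoped MonomialOrder
/-- substitution `Y_i ↦ Y_i + r_i` together with `σ` on coefficients -/
noncomputable def kurShift {k ι : Type*} [Field k] (σ : k →+* k) (r : ι → k) :
    MvPolynomial ι k →+* MvPolynomial ι k :=
  eval₂Hom (C.comp σ) (fun i => X i + C (r i))

theorem kurShift_pderiv {k ι : Type*} [Field k] (σ : k →+* k) (r : ι → k) (i : ι)
    (Q : MvPolynomial ι k) : pderiv i (kurShift σ r Q) = kurShift σ r (pderiv i Q) := by
  classical
  induction Q using MvPolynomial.induction_on with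
  | C a => simp [kurShift]
  | add p q hp hq => simp only [map_add, hp, hq]
  | mul_X p j hp =>
    have : pderiv i (kurShift σ r (X j)) = kurShift σ r (pderiv i (X j)) := by
      simp only [kurShift, eval₂Hom_X', map_add, pderiv_X, pderiv_C, add_zero]
      by_cases h : i = j
      · subst h; simp
      · simp [Ne.symm h]
    rw [map_mul, pderiv_mul, pderiv_mul, map_add, map_mul, map_mul, hp, this]

theorem kurShift_monomial {k ι : Type*} [Field k] (m : MonomialOrder ι)
    (σ : k →+* k) (r : ι → k) (a : ι →₀ ℕ) (c : k) (hc : c ≠ 0) :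
    m.degree (kurShift σ r (monomial a c)) = a ∧
      m.leadingCoeff (kurShift σ r (monomial a c)) = σ c := by
  have hmon : ∀ i, m.Monic (X i + C (r i) : MvPolynomial ι k) := fun i => m.monic_X_add_C i (r i)
  have h1 : kurShift σ r (monomial a c) = C (σ c) * ∏ i ∈ a.support, (X i + C (r i)) ^ a i := by
    simp [kurShift, eval₂Hom_monomial, Finsupp.prod]
  have hP : m.Monic (∏ i ∈ a.support, (X i + C (r i) : MvPolynomial ι k) ^ a i) :=
    MonomialOrder.Monic.prod fun i _ => (hmon i).pow
  have hc' : σ c ≠ 0 := by simpa using hc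
  rw [h1]
  constructor
  · rw [m.degree_mul (by simpa using hc') hP.ne_zero, m.degree_prod, m.degree_C, zero_add]
    · simp only [m.degree_pow, m.degree_X_add_C]
      simp only [Finsupp.smul_single, smul_eq_mul, mul_one]
      exact a.sum_single
    · intro i _
      exact ((hmon i).pow).ne_zero
  · rw [m.leadingCoeff_mul, hP.leadingCoeff_eq_one, m.leadingCoeff_C, mul_one]

theorem kurShift_lead {k ι : Type*} [Field k] (m : MonomialOrder ι)
    (σ : k →+* k) (r : ι → k) (Q : MvPolynomial ι k) (hQ : Q ≠ 0) :
    m.degree (kurShift σ r Q) = m.degree Q ∧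
      m.leadingCoeff (kurShift σ r Q) = σ (m.leadingCoeff Q) := by
  -- coefficientwise
  have hsum : kurShift σ r Q = ∑ a ∈ Q.support, kurShift σ r (monomial a (Q.coeff a)) := by
    conv_lhs => rw [Q.as_sum]
    rw [map_sum]
  have hle : m.degree (kurShift σ r Q) ≼[m] m.degree Q := by
    rw [hsum]
    refine m.degree_sum_le.trans ?_
    refine Finset.sup_le fun a ha => ?_
    rw [(kurShift_monomial m σ r a _ (mem_support_iff.1 ha)).1]
    exact m.le_degree ha
  have hco : (kurShift σ r Q).coeff (m.degree Q) = σ (m.leadingCoeff Q) := by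
    rw [hsum, coeff_sum, Finset.sum_eq_single (m.degree Q)]
    · have := kurShift_monomial m σ r (m.degree Q) (Q.coeff (m.degree Q))
        (m.coeff_degree_ne_zero_iff.2 hQ)
      rw [MonomialOrder.leadingCoeff, this.1] at this
      exact this.2
    · intro b hb hbne
      apply m.coeff_eq_zero_of_lt
      rw [(kurShift_monomial m σ r b _ (mem_support_iff.1 hb)).1]
      refine lt_of_le_of_ne (m.le_degree hb) ?_
      simpa using hbne
    · intro h
      exact absurd (m.degree_mem_support hQ) h
  have hne : (kurShift σ r Q).coeff (m.degree Q) ≠ 0 := by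
    rw [hco]; simpa using hQ
  have heq : m.degree (kurShift σ r Q) = m.degree Q := by
    apply m.toSyn.injective
    exact le_antisymm hle (m.le_degree (mem_support_iff.2 hne))
  refine ⟨heq, ?_⟩
  rw [MonomialOrder.leadingCoeff, heq, hco]

theorem kur_invariant {k ι R : Type*} [Field k] [CommRing R] [Nontrivial R] [Algebra k R]
    (m : MonomialOrder ι) (σ : k →+* k) (r : ι → k) (τ : R →+* R)
    (hτ : ∀ a, τ (algebraMap k R a) = algebraMap k R (σ a)) (y : ι → R)
    (hy : ∀ i, τ (y i) = y i + algebraMap k R (r i)) (h : ¬ AlgebraicIndependent k y) :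
    ∃ Q : MvPolynomial ι k, (∀ c, Q ≠ C c) ∧ kurShift σ r Q = Q := by
  have hcomm : ∀ Q : MvPolynomial ι k, aeval y (kurShift σ r Q) = τ (aeval y Q) := by
    intro Q
    induction Q using MvPolynomial.induction_on with
    | C a => simp [kurShift, hτ]
    | add p q hp hq => simp only [map_add, hp, hq]
    | mul_X p j hp => simp only [map_mul, hp]; simp [kurShift, hy]
  let S : Set (MvPolynomial ι k) := {Q | Q ≠ 0 ∧ aeval y Q = 0}
  have hS : S.Nonempty := by
    rw [algebraicIndependent_iff] at h
    push Not at h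
    obtain ⟨p, h1, h2⟩ := h
    exact ⟨p, h2, h1⟩
  have hwf : WellFounded (fun p q : MvPolynomial ι k => m.degree p ≺[m] m.degree q) :=
    InvImage.wf (fun p => m.toSyn (m.degree p)) wellFounded_lt
  let Q := hwf.min S hS
  have hQ : Q ∈ S := hwf.min_mem S hS
  have hmin : ∀ q ∈ S, ¬ (m.degree q ≺[m] m.degree Q) := fun q hq => hwf.not_lt_min S hq
  obtain ⟨hQ0, hQa⟩ := hQ
  have hlc : m.leadingCoeff Q ≠ 0 := by simpa using hQ0
  let Q1 := C (m.leadingCoeff Q)⁻¹ * Q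
  have hQ1 : Q1 ≠ 0 := mul_ne_zero (by simpa using hlc) hQ0
  have hdeg1 : m.degree Q1 = m.degree Q := by
    rw [m.degree_mul (by simpa using hlc) hQ0, m.degree_C, zero_add]
  have hlc1 : m.leadingCoeff Q1 = 1 := by
    rw [m.leadingCoeff_mul, m.leadingCoeff_C, inv_mul_cancel₀ hlc]
  have ha1 : aeval y Q1 = 0 := by rw [map_mul, hQa, mul_zero]
  refine ⟨Q1, ?_, ?_⟩
  · intro c hc
    rw [hc] at ha1
    have : c = 0 := by simpa using ha1
    apply hQ1
    rw [hc, this, map_zero]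
  · by_contra hne
    have hd := kurShift_lead m σ r Q1 hQ1
    rw [hlc1, map_one] at hd
    have hW0 : kurShift σ r Q1 - Q1 ≠ 0 := sub_ne_zero.2 hne
    refine hmin (kurShift σ r Q1 - Q1) ⟨hW0, ?_⟩ ?_
    · rw [map_sub, hcomm, ha1, map_zero, sub_zero]
    · rw [← hdeg1]
      refine lt_of_le_of_ne ?_ ?_
      · refine m.degree_sub_le.trans ?_
        rw [hd.1]; simp
      · intro heq
        have heq' := m.toSyn.injective heq
        have h1 := m.leadingCoeff_ne_zero_iff.2 hW0
        apply h1
        have h2 : m.leadingCoeff (kurShift σ r Q1) - m.leadingCoeff Q1 = 0 := by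
          rw [hd.2, hlc1, sub_self]
        unfold MonomialOrder.leadingCoeff at h2 ⊢
        rw [hd.1] at h2
        rw [heq', coeff_sub, h2]

theorem kur_totalDegree_pderiv {k ι : Type*} [Field k] [CharZero k] (Q : MvPolynomial ι k) (i : ι)
    (h : ∀ c, pderiv i Q ≠ C c) : (pderiv i Q).totalDegree < Q.totalDegree := by
  have h0 : pderiv i Q ≠ 0 := by simpa using h 0
  obtain ⟨b, hb, hb2⟩ := Finset.exists_mem_eq_sup (pderiv i Q).support
    (by simpa using h0) (fun s => s.sum fun _ e => e)
  have hb3 : (pderiv i Q).totalDegree = b.sum fun _ e => e := hb2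
  rw [hb3]
  have hb' : b + Finsupp.single i 1 ∈ Q.support := by
    rw [mem_support_iff, coeff_pderiv] at hb
    rw [mem_support_iff]
    intro hh
    apply hb
    simp [hh]
  refine lt_of_lt_of_le ?_ (le_totalDegree hb')
  rw [Finsupp.sum_add_index' (by simp) (by simp)]
  simp

theorem kur_linear {k ι : Type*} [Field k] [CharZero k] [Fintype ι] (σ : k →+* k) (r : ι → k)
    (Q : MvPolynomial ι k) (hQ : ∀ c, Q ≠ C c) (hσ : kurShift σ r Q = Q) :
    ∃ (c : ι → k) (g : k), (∃ i, c i ≠ 0) ∧ (∀ i, σ (c i) = c i) ∧ ∑ i, c i * r i = g - σ g := by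
  classical
  induction hn : Q.totalDegree using Nat.strong_induction_on generalizing Q with
  | _ n ih =>
  by_cases hd : ∃ i, ∀ c, pderiv i Q ≠ C c
  · obtain ⟨i, hi⟩ := hd
    refine ih _ (hn ▸ kur_totalDegree_pderiv Q i hi) (pderiv i Q) hi ?_ rfl
    rw [← kurShift_pderiv, hσ]
  · push Not at hd
    choose c hc using hd
    have hconst : ∀ L : MvPolynomial ι k, (∀ i, pderiv i L = 0) → L = C (L.coeff 0) := by
      intro L hL
      ext b
      by_cases hb : b = 0
      · subst hb; simp
      · rw [coeff_C, if_neg (Ne.symm hb)]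
        obtain ⟨i, hi⟩ : ∃ i, b i ≠ 0 := by
          by_contra! h; exact hb (Finsupp.ext h)
        have h1 := congrArg (coeff (b - Finsupp.single i 1)) (hL i)
        rw [coeff_pderiv, tsub_add_cancel_of_le (by simpa [Nat.one_le_iff_ne_zero] using hi)] at h1
        simp only [coeff_zero, mul_eq_zero] at h1
        rcases h1 with h1 | h1
        · exact h1
        · exfalso; exact (Nat.cast_add_one_ne_zero _) h1
    let L := Q - ∑ i, C (c i) * X i
    have hL : L = C (L.coeff 0) := by
      apply hconst
      intro i
      simp only [L, map_sub, map_sum, hc, pderiv_C_mul, pderiv_X]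
      rw [Finset.sum_eq_single i]
      · simp
      · intro j _ hj; simp [hj.symm]
      · simp
    set g := L.coeff 0
    have hQe : Q = C g + ∑ i, C (c i) * X i := by
      rw [← hL]; simp [L]
    refine ⟨c, g, ?_, ?_, ?_⟩
    · by_contra! h
      apply hQ g
      rw [hQe]; simp [h]
    · intro i
      have h1 := kurShift_pderiv σ r i Q
      rw [hσ, hc] at h1
      have h2 : (C (c i) : MvPolynomial ι k) = C (σ (c i)) := by
        rw [h1]; simp [kurShift]
      exact (C_injective ι k h2).symm
    · have h1 := congrArg (constantCoeff) hσ
      rw [hQe] at h1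
      simp [kurShift] at h1
      have hσc : ∀ i, σ (c i) = c i := by
        intro i
        have h1 := kurShift_pderiv σ r i Q
        rw [hσ, hc] at h1
        have h2 : (C (c i) : MvPolynomial ι k) = C (σ (c i)) := by
          rw [h1]; simp [kurShift]
        exact (C_injective ι k h2).symm
      simp only [hσc] at h1
      linear_combination h1

theorem kur_const (p q : Polynomial ℂ) (hq : q ≠ 0)
    (h : p.comp (Polynomial.X + 1) * q = p * q.comp (Polynomial.X + 1)) :
    ∃ a : ℂ, p = Polynomial.C a * q := by
  have hfin : {n : ℕ | q.IsRoot (n : ℂ)}.Finite := by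
    have := (Polynomial.finite_setOfPred_isRoot hq).preimage (f := fun n : ℕ => (n : ℂ))
      (Nat.cast_injective.injOn)
    exact this
  obtain ⟨n0, hn0⟩ := hfin.bddAbove
  have hne : ∀ n : ℕ, n0 + 1 ≤ n → q.eval (n : ℂ) ≠ 0 := by
    intro n hn hroot
    have := hn0 (show n ∈ {n : ℕ | q.IsRoot (n : ℂ)} from hroot)
    omega
  set m := n0 + 1
  refine ⟨p.eval (m : ℂ) / q.eval (m : ℂ), ?_⟩
  have hall : ∀ n : ℕ, m ≤ n → p.eval (n : ℂ) = p.eval (m : ℂ) / q.eval (m : ℂ) * q.eval (n : ℂ) := by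
    intro n hn
    induction n, hn using Nat.le_induction with
    | base => field_simp [hne m le_rfl]
    | succ n hn ih =>
      have h1 := congrArg (Polynomial.eval (n : ℂ)) h
      simp only [Polynomial.eval_mul, Polynomial.eval_comp, Polynomial.eval_add, Polynomial.eval_X,
        Polynomial.eval_one] at h1
      push_cast
      apply mul_right_cancel₀ (hne n hn)
      rw [h1, ih]; ring
  apply Polynomial.eq_of_infinite_eval_eq
  refine Set.Infinite.mono (s := (fun n : ℕ => (n : ℂ)) '' Set.Ici m) ?_ ?_
  · rintro _ ⟨n, hn, rfl⟩
    simpa using hall n hn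
  · exact (Set.Ici_infinite m).image Nat.cast_injective.injOn

theorem kur_poles (p q u : Polynomial ℂ) (N : ℕ) (hpq : IsCoprime p q) (hq : q ≠ 0) (hu : u ≠ 0)
    (hdeg : u.natDegree < N)
    (h : u * (q * q.comp (Polynomial.X + 1)) = Polynomial.X ^ N *
      (p * q.comp (Polynomial.X + 1) - p.comp (Polynomial.X + 1) * q)) : False := by
  have hev : ∀ x : ℂ, u.eval x * (q.eval x * q.eval (x + 1)) =
      x ^ N * (p.eval x * q.eval (x + 1) - p.eval (x + 1) * q.eval x) := by
    intro x
    have := congrArg (Polynomial.eval x) h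
    simpa using this
  have hnp : ∀ x : ℂ, q.eval x = 0 → p.eval x ≠ 0 := by
    intro x hx hpx
    obtain ⟨a, b, hab⟩ := hpq
    have := congrArg (Polynomial.eval x) hab
    simp [hx, hpx] at this
  have hfin : {n : ℤ | q.eval (n : ℂ) = 0}.Finite := by
    have := (Polynomial.finite_setOfPred_isRoot hq).preimage (f := fun n : ℤ => (n : ℂ))
      (Int.cast_injective.injOn)
    exact this
  have hnon : {n : ℤ | q.eval (n : ℂ) = 0}.Nonempty := by
    by_contra hemp
    rw [Set.not_nonempty_iff_eq_empty] at hemp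
    have hz : ∀ n : ℤ, q.eval (n : ℂ) ≠ 0 := by
      intro n hn
      have : n ∈ {n : ℤ | q.eval (n : ℂ) = 0} := hn
      simp [hemp] at this
    have hX : ¬ (Polynomial.X ∣ q * q.comp (Polynomial.X + 1)) := by
      rw [Polynomial.X_dvd_iff, Polynomial.coeff_zero_eq_eval_zero]
      simpa using ⟨by simpa using hz 0, by simpa using hz 1⟩
    have hcop : IsCoprime (Polynomial.X ^ N) (q * q.comp (Polynomial.X + 1)) :=
      IsCoprime.pow_left ((Polynomial.prime_X.irreducible.coprime_iff_not_dvd).2 hX)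
    have hdvd : Polynomial.X ^ N ∣ u := hcop.dvd_of_dvd_mul_right ⟨_, h⟩
    have := Polynomial.natDegree_le_of_dvd hdvd hu
    simp at this
    omega
  obtain ⟨s, hs, hsmax⟩ := Set.exists_max_image _ id hfin hnon
  obtain ⟨t, ht, htmin⟩ := Set.exists_min_image _ id hfin hnon
  simp only [Set.mem_ofPred_eq, id] at hs hsmax ht htmin
  have hN : N ≠ 0 := by omega
  have hs0 : s = 0 := by
    by_contra hs0
    have h1 := hev s
    have h2 : q.eval ((s : ℂ) + 1) ≠ 0 := by
      intro h2
      have := hsmax (s + 1) (by push_cast; exact h2)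
      omega
    rw [hs] at h1
    have := hnp _ hs
    simp [hN, hs0, h2, this] at h1
  have ht1 : t = 1 := by
    by_contra ht1
    have h1 := hev ((t - 1 : ℤ) : ℂ)
    have h2 : q.eval ((t - 1 : ℤ) : ℂ) ≠ 0 := by
      intro h2
      have := htmin (t - 1) h2
      omega
    have h3 : (((t - 1 : ℤ) : ℂ) + 1) = t := by push_cast; ring
    have h4 : ((t - 1 : ℤ) : ℂ) ≠ 0 := by
      rw [Int.cast_ne_zero]; omega
    rw [h3, ht] at h1
    have := hnp _ ht
    rw [mul_zero, mul_zero, mul_zero, zero_sub, mul_neg, zero_eq_neg] at h1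
    exact mul_ne_zero (pow_ne_zero _ h4) (mul_ne_zero this h2) h1
  have := hsmax t ht
  omega

/-- `p(X) ↦ p(X+1)` on polynomials -/
noncomputable def kurPhi : Polynomial ℂ →+* Polynomial ℂ := Polynomial.compRingHom (Polynomial.X + 1)

theorem kurPhi_inj : Function.Injective kurPhi := by
  have : ∀ p : Polynomial ℂ, (kurPhi p).comp (Polynomial.X - 1) = p := by
    intro p
    simp [kurPhi, Polynomial.comp_assoc]
  exact Function.LeftInverse.injective this

/-- `f(X) ↦ f(X+1)` on rational functions -/
noncomputable def kurSigma : RatFunc ℂ →+* RatFunc ℂ :=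
  IsFractionRing.lift (A := Polynomial ℂ) (g := (algebraMap (Polynomial ℂ) (RatFunc ℂ)).comp kurPhi)
    ((RatFunc.algebraMap_injective ℂ).comp kurPhi_inj)

theorem kurSigma_poly (p : Polynomial ℂ) :
    kurSigma (algebraMap _ _ p) = algebraMap _ _ (p.comp (Polynomial.X + 1)) := by
  rw [kurSigma, IsFractionRing.lift_algebraMap]; rfl

theorem kur_no_telescope (N : ℕ) (c : Fin N → RatFunc ℂ) (g : RatFunc ℂ) (w : Fin N → ℂ)
    (hw : ∀ i, w i ≠ 0)
    (hc : ∃ i, c i ≠ 0) (hσ : ∀ i, kurSigma (c i) = c i)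
    (h : ∑ i, c i * (algebraMap (Polynomial ℂ) _ (Polynomial.C (w i)) /
      algebraMap (Polynomial ℂ) _ (Polynomial.X ^ ((i : ℕ) + 1))) = g - kurSigma g) : False := by
  have hinj := RatFunc.algebraMap_injective ℂ
  have hcc : ∀ i, ∃ a : ℂ, c i = algebraMap (Polynomial ℂ) _ (Polynomial.C a) := by
    intro i
    have h1 := hσ i
    have hd := RatFunc.denom_ne_zero (c i)
    have hd' : algebraMap (Polynomial ℂ) (RatFunc ℂ) (c i).denom ≠ 0 := by
      simpa using hd
    have hd2 : algebraMap (Polynomial ℂ) (RatFunc ℂ) ((c i).denom.comp (Polynomial.X + 1)) ≠ 0 := by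
      rw [← kurSigma_poly]; simpa using hd
    rw [← RatFunc.num_div_denom (c i), map_div₀, kurSigma_poly, kurSigma_poly,
      div_eq_div_iff hd2 hd', ← map_mul, ← map_mul] at h1
    obtain ⟨a, ha⟩ := kur_const _ _ hd (hinj h1)
    refine ⟨a, ?_⟩
    rw [← RatFunc.num_div_denom (c i), div_eq_iff hd', ← map_mul, ha]
  choose a ha using hcc
  let u : Polynomial ℂ := ∑ i : Fin N, Polynomial.C (a i * w i) * Polynomial.X ^ (N - 1 - (i : ℕ))
  obtain ⟨i0, hi0⟩ := hc
  have hN : 0 < N := by have := i0.2; omega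
  have hu : u ≠ 0 := by
    intro hu
    have h1 := congrArg (fun f => Polynomial.coeff f (N - 1 - (i0 : ℕ))) hu
    simp only [u, Polynomial.finsetSum_coeff, Polynomial.coeff_C_mul, Polynomial.coeff_X_pow,
      Polynomial.coeff_zero] at h1
    rw [Finset.sum_eq_single i0] at h1
    · simp [hw i0] at h1
      apply hi0
      rw [ha, h1]; simp
    · intro j _ hj
      rw [if_neg, mul_zero]
      intro h2
      apply hj
      ext
      have := i0.2
      have := j.2
      omega
    · simp
  have hdeg : u.natDegree < N := by
    have : u.natDegree ≤ N - 1 := by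
      refine Polynomial.natDegree_sum_le_of_forall_le _ _ fun i _ => ?_
      refine (Polynomial.natDegree_C_mul_X_pow_le _ _).trans (by omega)
    omega
  have hX : algebraMap (Polynomial ℂ) (RatFunc ℂ) (Polynomial.X) ≠ 0 := by
    simpa using RatFunc.X_ne_zero
  have hsum : ∑ i, c i * (algebraMap (Polynomial ℂ) _ (Polynomial.C (w i)) /
      algebraMap (Polynomial ℂ) _ (Polynomial.X ^ ((i : ℕ) + 1))) =
      algebraMap (Polynomial ℂ) (RatFunc ℂ) u / algebraMap (Polynomial ℂ) (RatFunc ℂ) (Polynomial.X ^ N) := by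
    rw [map_sum, Finset.sum_div]
    refine Finset.sum_congr rfl fun i _ => ?_
    rw [ha, map_mul, map_mul Polynomial.C, map_mul, map_pow, map_pow, map_pow]
    have hN' : N = (N - 1 - (i : ℕ)) + ((i : ℕ) + 1) := by have := i.2; omega
    have : algebraMap (Polynomial ℂ) (RatFunc ℂ) Polynomial.X ^ N =
      algebraMap (Polynomial ℂ) (RatFunc ℂ) Polynomial.X ^ (N - 1 - (i : ℕ)) *
      algebraMap (Polynomial ℂ) (RatFunc ℂ) Polynomial.X ^ ((i : ℕ) + 1) := by
      rw [← pow_add, ← hN']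
    rw [this]
    have := pow_ne_zero (N - 1 - (i : ℕ)) hX
    have := pow_ne_zero ((i : ℕ) + 1) hX
    field_simp
  rw [hsum] at h
  have hd := RatFunc.denom_ne_zero g
  have hd' : algebraMap (Polynomial ℂ) (RatFunc ℂ) g.denom ≠ 0 := by
    simpa using hd
  have hd2 : algebraMap (Polynomial ℂ) (RatFunc ℂ) (g.denom.comp (Polynomial.X + 1)) ≠ 0 := by
    rw [← kurSigma_poly]; simpa using hd
  have hXN : algebraMap (Polynomial ℂ) (RatFunc ℂ) (Polynomial.X ^ N) ≠ 0 := by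
    rw [map_pow]; exact pow_ne_zero _ hX
  refine kur_poles g.num g.denom u N g.isCoprime_num_denom hd hu hdeg (hinj ?_)
  rw [← RatFunc.num_div_denom g, map_div₀, kurSigma_poly, kurSigma_poly,
    div_sub_div _ _ hd' hd2, div_eq_div_iff hXN (mul_ne_zero hd' hd2)] at h
  simp only [map_mul, map_sub] at h ⊢
  linear_combination h

open Filter in
/-- germs at infinity of complex sequences -/
abbrev KurGerm := Filter.Germ (Filter.atTop : Filter ℕ) ℂ

/-- evaluation of polynomials as germs of sequences -/
noncomputable def kurEv : Polynomial ℂ →+* KurGerm where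
  toFun p := ((fun n : ℕ => p.eval (n : ℂ) : ℕ → ℂ) : KurGerm)
  map_one' := by simp; rfl
  map_zero' := by simp; rfl
  map_add' p q := by simp only [Polynomial.eval_add]; rfl
  map_mul' p q := by simp only [Polynomial.eval_mul]; rfl

theorem kurEv_unit (p : nonZeroDivisors (Polynomial ℂ)) : IsUnit (kurEv p) := by
  have hp : (p : Polynomial ℂ) ≠ 0 := nonZeroDivisors.ne_zero p.2
  refine IsUnit.of_mul_eq_one ((fun n : ℕ => ((p : Polynomial ℂ).eval (n : ℂ))⁻¹ : ℕ → ℂ) : KurGerm) ?_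
  change (((fun n : ℕ => (p : Polynomial ℂ).eval (n : ℂ) * ((p : Polynomial ℂ).eval (n : ℂ))⁻¹) : ℕ → ℂ) : KurGerm)
    = ((fun _ => 1 : ℕ → ℂ) : KurGerm)
  rw [Filter.Germ.coe_eq]
  have hfin : {n : ℕ | (p : Polynomial ℂ).IsRoot (n : ℂ)}.Finite :=
    (Polynomial.finite_setOfPred_isRoot hp).preimage (f := fun n : ℕ => (n : ℂ))
      (Nat.cast_injective.injOn)
  have := hfin.compl_mem_cofinite
  rw [Nat.cofinite_eq_atTop] at this
  filter_upwards [this] with n hn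
  exact mul_inv_cancel₀ hn

/-- rational functions as germs of sequences -/
noncomputable def kurLift : RatFunc ℂ →+* KurGerm :=
  IsLocalization.lift (M := nonZeroDivisors (Polynomial ℂ)) (g := kurEv) kurEv_unit

theorem kurLift_poly (p : Polynomial ℂ) : kurLift (algebraMap _ _ p) = kurEv p :=
  IsLocalization.lift_eq _ _

/-- shift on germs of sequences -/
noncomputable def kurTau : KurGerm →+* KurGerm where
  toFun g := g.compTendsto (fun n => n + 1) (Filter.tendsto_add_atTop_nat 1)
  map_one' := rfl
  map_zero' := rfl
  map_add' p q := by
    induction p using Filter.Germ.inductionOn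
    induction q using Filter.Germ.inductionOn
    rfl
  map_mul' p q := by
    induction p using Filter.Germ.inductionOn
    induction q using Filter.Germ.inductionOn
    rfl

theorem kurTau_lift (a : RatFunc ℂ) : kurTau (kurLift a) = kurLift (kurSigma a) := by
  have : kurTau.comp kurLift = kurLift.comp kurSigma := by
    apply IsLocalization.ringHom_ext (nonZeroDivisors (Polynomial ℂ))
    apply RingHom.ext
    intro p
    simp only [RingHom.comp_apply, kurSigma_poly, kurLift_poly]
    change ((fun n : ℕ => p.eval ((n + 1 : ℕ) : ℂ) : ℕ → ℂ) : KurGerm) = ((fun n : ℕ => _ : ℕ → ℂ) : KurGerm)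
    simp [Polynomial.eval_comp]
  exact RingHom.congr_fun this a

theorem kur_step2 (N : ℕ) (w : Fin N → ℂ) (hw : ∀ i, w i ≠ 0) (y : Fin N → ℕ → ℂ)
    (hy : ∀ i, ∀ n : ℕ, 1 ≤ n → y i (n + 1) = y i n + w i / (n : ℂ) ^ ((i : ℕ) + 1))
    (P : MvPolynomial (Option (Fin N)) ℂ) (hP : P ≠ 0)
    (h : ∀ n : ℕ, 1 ≤ n → eval (fun o : Option (Fin N) => o.elim (n : ℂ) (fun i => y i n)) P = 0) :
    False := by
  let _ : Algebra (RatFunc ℂ) KurGerm := kurLift.toAlgebra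
  have hmap : algebraMap (RatFunc ℂ) KurGerm = kurLift := rfl
  let r : Fin N → RatFunc ℂ := fun i => algebraMap (Polynomial ℂ) _ (Polynomial.C (w i)) /
      algebraMap (Polynomial ℂ) _ (Polynomial.X ^ ((i : ℕ) + 1))
  let Y : Fin N → KurGerm := fun i => (y i : KurGerm)
  have hY : ∀ i, kurTau (Y i) = Y i + algebraMap (RatFunc ℂ) KurGerm (r i) := by
    intro i
    have hX : (Polynomial.X ^ ((i : ℕ) + 1) : Polynomial ℂ) ≠ 0 := pow_ne_zero _ Polynomial.X_ne_zero
    have hu := kurEv_unit ⟨_, mem_nonZeroDivisors_of_ne_zero hX⟩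
    have h1 : kurLift (r i) = ((fun n : ℕ => w i / (n : ℂ) ^ ((i : ℕ) + 1) : ℕ → ℂ) : KurGerm) := by
      apply hu.mul_left_cancel
      simp only
      rw [← kurLift_poly, ← map_mul, mul_div_cancel₀, kurLift_poly, kurLift_poly]
      · change ((fun n : ℕ => _ : ℕ → ℂ) : KurGerm) = ((fun n : ℕ => _ * _ : ℕ → ℂ) : KurGerm)
        rw [Filter.Germ.coe_eq]
        filter_upwards [Filter.eventually_ge_atTop 1] with n hn
        have : (n : ℂ) ≠ 0 := by rw [Nat.cast_ne_zero]; omega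
        simp only [Polynomial.eval_C, Polynomial.eval_pow, Polynomial.eval_X]
        field_simp
      · simpa using RatFunc.X_ne_zero
    rw [hmap, h1]
    change ((fun n : ℕ => y i (n + 1) : ℕ → ℂ) : KurGerm) = ((fun n : ℕ => y i n + _ : ℕ → ℂ) : KurGerm)
    rw [Filter.Germ.coe_eq]
    filter_upwards [Filter.eventually_ge_atTop 1] with n hn
    exact hy i n hn
  have hev : ∀ P : MvPolynomial (Option (Fin N)) ℂ, eval₂Hom kurEv Y (optionEquivRight ℂ (Fin N) P) =
      ((fun n : ℕ => eval (fun o : Option (Fin N) => o.elim (n : ℂ) (fun i => y i n)) P : ℕ → ℂ) : KurGerm) := by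
    intro P
    induction P using MvPolynomial.induction_on with
    | C a =>
      rw [optionEquivRight_C, eval₂Hom_C]
      simp [kurEv]
    | add p q hp hq =>
      rw [map_add, map_add, hp, hq]
      simp only [map_add]; rfl
    | mul_X p j hp =>
      rw [map_mul, map_mul, hp]
      simp only [map_mul]
      rcases j with _ | j
      · rw [optionEquivRight_X_none, eval₂Hom_C]
        simp [kurEv]; rfl
      · rw [optionEquivRight_X_some, eval₂Hom_X']
        simp [Y]; rfl
  have hdep : ¬ AlgebraicIndependent (RatFunc ℂ) Y := by
    rw [algebraicIndependent_iff]
    push Not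
    refine ⟨MvPolynomial.map (algebraMap (Polynomial ℂ) (RatFunc ℂ)) (optionEquivRight ℂ (Fin N) P), ?_, ?_⟩
    · rw [aeval_def, eval₂_map]
      have : (algebraMap (RatFunc ℂ) KurGerm).comp (algebraMap (Polynomial ℂ) (RatFunc ℂ)) = kurEv := by
        apply RingHom.ext; intro p; exact kurLift_poly p
      rw [this]
      refine (hev P).trans ?_
      change _ = ((fun _ => 0 : ℕ → ℂ) : KurGerm)
      rw [Filter.Germ.coe_eq]
      filter_upwards [Filter.eventually_ge_atTop 1] with n hn
      exact h n hn
    · intro h0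
      have := MvPolynomial.map_injective _ (RatFunc.algebraMap_injective ℂ) (h0.trans (map_zero _).symm)
      exact hP ((optionEquivRight ℂ (Fin N)).injective (this.trans (map_zero _).symm))
  obtain ⟨Q, hQ, hinv⟩ := kur_invariant (MonomialOrder.lex) kurSigma r kurTau kurTau_lift Y hY hdep
  obtain ⟨c, g, h1, h2, h3⟩ := kur_linear kurSigma r Q hQ hinv
  exact kur_no_telescope N c g w hw h1 h2 h3

end KurStepTwo

open Topology Filter in
/-- Taylor series -/
noncomputable def kurT (z0 : ℂ) (f : ℂ → ℂ) : PowerSeries ℂ :=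
  PowerSeries.mk fun n => iteratedDeriv n f z0 / (n.factorial : ℂ)

theorem kurT_add (z0 : ℂ) {f g : ℂ → ℂ} (hf : AnalyticAt ℂ f z0) (hg : AnalyticAt ℂ g z0) :
    kurT z0 (fun z => f z + g z) = kurT z0 f + kurT z0 g := by
  ext n
  simp only [kurT, PowerSeries.coeff_mk, map_add]
  rw [iteratedDeriv_fun_add hf.contDiffAt hg.contDiffAt, add_div]

theorem kurT_mul (z0 : ℂ) {f g : ℂ → ℂ} (hf : AnalyticAt ℂ f z0) (hg : AnalyticAt ℂ g z0) :
    kurT z0 (fun z => f z * g z) = kurT z0 f * kurT z0 g := by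
  ext n
  rw [PowerSeries.coeff_mul, Finset.Nat.sum_antidiagonal_eq_sum_range_succ_mk]
  simp only [kurT, PowerSeries.coeff_mk]
  rw [iteratedDeriv_fun_mul hf.contDiffAt hg.contDiffAt, Finset.sum_div]
  refine Finset.sum_congr rfl fun i hi => ?_
  have hi' : i ≤ n := by simpa [Nat.lt_succ_iff] using hi
  rw [Nat.cast_choose ℂ hi']
  have h1 : (n.factorial : ℂ) ≠ 0 := by exact_mod_cast n.factorial_ne_zero
  have h2 : (i.factorial : ℂ) ≠ 0 := by exact_mod_cast i.factorial_ne_zero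
  have h3 : ((n - i).factorial : ℂ) ≠ 0 := by exact_mod_cast (n - i).factorial_ne_zero
  field_simp

theorem kurT_const (z0 c : ℂ) : kurT z0 (fun _ => c) = PowerSeries.C c := by
  ext n
  simp only [kurT, PowerSeries.coeff_mk, PowerSeries.coeff_C, iteratedDeriv_const]
  split_ifs with h
  · subst h; simp
  · simp

theorem kurT_deriv (z0 : ℂ) (f : ℂ → ℂ) :
    kurT z0 (deriv f) = PowerSeries.derivative ℂ (kurT z0 f) := by
  ext n
  simp only [kurT, PowerSeries.coeff_mk, PowerSeries.coeff_derivative,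
    iteratedDeriv_succ', Nat.factorial_succ]
  have h1 : (n.factorial : ℂ) ≠ 0 := by exact_mod_cast n.factorial_ne_zero
  have h2 : (n : ℂ) + 1 ≠ 0 := by exact_mod_cast n.succ_ne_zero
  push_cast
  field_simp

theorem kurT_iter (z0 : ℂ) (f : ℂ → ℂ) (i : ℕ) :
    (PowerSeries.derivative ℂ)^[i] (kurT z0 f) = kurT z0 (iteratedDeriv i f) := by
  induction i with
  | zero => simp
  | succ i ih => rw [Function.iterate_succ_apply', ih, ← kurT_deriv, iteratedDeriv_succ]

theorem kurT_congr {z0 : ℂ} {f g : ℂ → ℂ} (h : f =ᶠ[nhds z0] g) : kurT z0 f = kurT z0 g := by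
  ext n
  simp only [kurT, PowerSeries.coeff_mk, h.iteratedDeriv_eq n]

theorem kurT_eq_zero {z0 : ℂ} {f : ℂ → ℂ} (hf : AnalyticAt ℂ f z0) (h : kurT z0 f = 0) :
    f =ᶠ[nhds z0] fun _ => 0 := by
  have h1 := hf.hasFPowerSeriesAt
  have h2 : FormalMultilinearSeries.ofScalars ℂ (fun n => iteratedDeriv n f z0 / (n.factorial : ℂ))
      = (0 : FormalMultilinearSeries ℂ ℂ ℂ) := by
    have : (fun n => iteratedDeriv n f z0 / (n.factorial : ℂ)) = 0 := by
      funext n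
      have := congrArg (PowerSeries.coeff n) h
      simpa only [kurT, PowerSeries.coeff_mk, map_zero, Pi.zero_apply] using this
    rw [this]
    ext; simp [FormalMultilinearSeries.ofScalars]
  rw [h2] at h1
  exact h1.eventually_eq_zero

theorem kurT_an {ι : Type*} {z0 : ℂ} (v : ι → ℂ → ℂ) (hv : ∀ i, AnalyticAt ℂ (v i) z0)
    (P : MvPolynomial ι ℂ) : AnalyticAt ℂ (fun z => MvPolynomial.eval (fun i => v i z) P) z0 := by
  induction P using MvPolynomial.induction_on with
  | C a => simpa using analyticAt_const
  | add p q hp hq => simp only [map_add]; exact hp.add hq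
  | mul_X p i hp => simp only [map_mul, MvPolynomial.eval_X]; exact hp.mul (hv i)

theorem kurT_aeval {ι : Type*} {z0 : ℂ} (v : ι → ℂ → ℂ) (hv : ∀ i, AnalyticAt ℂ (v i) z0)
    (P : MvPolynomial ι ℂ) : MvPolynomial.aeval (fun i => kurT z0 (v i)) P =
      kurT z0 (fun z => MvPolynomial.eval (fun i => v i z) P) := by
  induction P using MvPolynomial.induction_on with
  | C a =>
    simp only [MvPolynomial.eval_C, kurT_const]
    rw [MvPolynomial.aeval_C]; rfl
  | add p q hp hq =>
    simp only [map_add]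
    rw [kurT_add z0 (kurT_an v hv p) (kurT_an v hv q), hp, hq]
  | mul_X p i hp =>
    simp only [map_mul, MvPolynomial.eval_X, MvPolynomial.aeval_X]
    rw [kurT_mul z0 (kurT_an v hv p) (hv i), hp]

theorem kurT_dep {ι : Type*} {z0 : ℂ} (v : ι → ℂ → ℂ) (hv : ∀ i, AnalyticAt ℂ (v i) z0)
    (P : MvPolynomial ι ℂ) (hP : P ≠ 0)
    (h : ∀ᶠ z in nhds z0, MvPolynomial.eval (fun i => v i z) P = 0) :
    ¬ AlgebraicIndependent ℂ (fun i => kurT z0 (v i)) := by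
  rw [algebraicIndependent_iff]
  intro hh
  refine hP (hh P ?_)
  rw [kurT_aeval v hv, kurT_congr (g := fun _ => 0) h, kurT_const, map_zero]

theorem kurT_dep' {ι : Type*} {z0 : ℂ} (v : ι → ℂ → ℂ) (hv : ∀ i, AnalyticAt ℂ (v i) z0)
    (h : ¬ AlgebraicIndependent ℂ (fun i => kurT z0 (v i))) :
    ∃ P : MvPolynomial ι ℂ, P ≠ 0 ∧ ∀ᶠ z in nhds z0, MvPolynomial.eval (fun i => v i z) P = 0 := by
  rw [algebraicIndependent_iff] at h
  push Not at h
  obtain ⟨P, h0, hP⟩ := h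
  refine ⟨P, hP, ?_⟩
  rw [kurT_aeval v hv] at h0
  exact kurT_eq_zero (kurT_an v hv P) h0

theorem kurT_id_deriv (z0 : ℂ) : PowerSeries.derivative ℂ (kurT z0 (fun z => z)) = 1 := by
  rw [← kurT_deriv]
  simp only [deriv_id'']
  rw [kurT_const, map_one]

theorem kurT_id_transc (z0 : ℂ) : Transcendental ℂ (kurT z0 (fun z => z)) := by
  rw [transcendental_iff]
  intro p hp
  have key : ∀ p : Polynomial ℂ, Polynomial.aeval (kurT z0 (fun z => z)) p = kurT z0 (fun z => p.eval z) := by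
    intro p
    induction p using Polynomial.induction_on with
    | C a =>
      simp only [Polynomial.eval_C, kurT_const]
      rw [Polynomial.aeval_C]; rfl
    | add p q hp hq =>
      simp only [map_add, Polynomial.eval_add]
      rw [kurT_add z0 (p.differentiable.analyticAt _) (q.differentiable.analyticAt _), hp, hq]
    | monomial n a h =>
      have e : ∀ z : ℂ, (Polynomial.C a * Polynomial.X ^ (n + 1)).eval z =
        (Polynomial.C a * Polynomial.X ^ n).eval z * z := by intro z; simp [pow_succ, mul_assoc]
      simp only [e]
      rw [kurT_mul (g := fun z => z) z0 (Polynomial.differentiable _ |>.analyticAt _) analyticAt_id, ← h, pow_succ, ← mul_assoc, map_mul,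
        Polynomial.aeval_X]
  rw [key] at hp
  have h1 := kurT_eq_zero (p.differentiable.analyticAt _) hp
  by_contra hne
  have h2 : {z : ℂ | p.IsRoot z}.Finite := Polynomial.finite_setOfPred_isRoot hne
  exact (infinite_of_mem_nhds z0 h1) h2

/-- shift of the first variable -/
noncomputable def kurTrans (n : ℕ) (c : ℂ) : MvPolynomial (Fin (n + 2)) ℂ →ₐ[ℂ] MvPolynomial (Fin (n + 2)) ℂ :=
  MvPolynomial.aeval (fun i => if i.val = 0 then MvPolynomial.X i + MvPolynomial.C c else MvPolynomial.X i)

theorem kurTrans_inv (n : ℕ) (c : ℂ) (P : MvPolynomial (Fin (n + 2)) ℂ) :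
    kurTrans n (-c) (kurTrans n c P) = P := by
  have : (kurTrans n (-c)).comp (kurTrans n c) = AlgHom.id ℂ _ := by
    apply MvPolynomial.algHom_ext
    intro i
    simp only [kurTrans, AlgHom.comp_apply, MvPolynomial.aeval_X, AlgHom.id_apply]
    split_ifs with h
    · rw [map_add, MvPolynomial.aeval_X, if_pos h, ← MvPolynomial.algebraMap_eq, AlgHom.commutes]
      simp [MvPolynomial.algebraMap_eq]
    · rw [MvPolynomial.aeval_X, if_neg h]
  exact AlgHom.congr_fun this P

theorem kurTrans_eval (n : ℕ) (c : ℂ) (P : MvPolynomial (Fin (n + 2)) ℂ) (a : Fin (n + 2) → ℂ) :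
    MvPolynomial.eval a (kurTrans n c P) =
      MvPolynomial.eval (fun i => if i.val = 0 then a i + c else a i) P := by
  rw [kurTrans]
  induction P using MvPolynomial.induction_on with
  | C a => simp
  | add p q hp hq => simp only [map_add, hp, hq]
  | mul_X p i hp =>
    simp only [map_mul, hp, MvPolynomial.aeval_X, MvPolynomial.eval_X]
    split_ifs <;> simp

theorem kur_gamma_an {z : ℂ} (hz : 0 < z.re) : AnalyticAt ℂ Complex.Gamma z := by
  have ho : IsOpen {z : ℂ | 0 < z.re} := isOpen_lt continuous_const Complex.continuous_re
  have : DifferentiableOn ℂ Complex.Gamma {z : ℂ | 0 < z.re} := by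
    intro s hs
    refine (Complex.differentiableAt_Gamma s fun m h => ?_).differentiableWithinAt
    rw [h] at hs
    simp at hs
    have : (0 : ℝ) ≤ m := Nat.cast_nonneg m
    linarith
  exact this.analyticAt (ho.mem_nhds hz)

theorem kur_digamma_an {z : ℂ} (hz : 0 < z.re) : AnalyticAt ℂ Complex.digamma z := by
  have h := kur_gamma_an hz
  exact h.deriv.div h (Complex.Gamma_ne_zero_of_re_pos hz)

theorem kur_iter_an {f : ℂ → ℂ} {z : ℂ} (h : AnalyticAt ℂ f z) (i : ℕ) :
    AnalyticAt ℂ (iteratedDeriv i f) z := by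
  rw [iteratedDeriv_eq_iterate]
  exact h.iterated_deriv i

theorem kur_digamma_rec (i n : ℕ) (hn : 1 ≤ n) :
    iteratedDeriv i Complex.digamma ((n + 1 : ℕ) : ℂ) = iteratedDeriv i Complex.digamma (n : ℂ) +
      ((-1) ^ i * (i.factorial : ℂ)) / (n : ℂ) ^ (i + 1) := by
  have hpos : 0 < ((n : ℂ)).re := by simp; omega
  have hn0 : (n : ℂ) ≠ 0 := by rw [Nat.cast_ne_zero]; omega
  have ho : IsOpen {z : ℂ | 0 < z.re} := isOpen_lt continuous_const Complex.continuous_re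
  have h1 : (fun z : ℂ => Complex.digamma (z + 1)) =ᶠ[nhds (n : ℂ)]
      fun z => Complex.digamma z + z⁻¹ := by
    filter_upwards [ho.mem_nhds hpos] with z hz
    refine Complex.digamma_apply_add_one z fun m h => ?_
    rw [h] at hz
    simp at hz
    have : (0 : ℝ) ≤ m := Nat.cast_nonneg m
    linarith
  have h2 := h1.iteratedDeriv_eq i
  rw [iteratedDeriv_comp_add_const, iteratedDeriv_fun_add (kur_digamma_an hpos).contDiffAt
    (analyticAt_inv hn0).contDiffAt] at h2
  have h3 : iteratedDeriv i (fun z : ℂ => z⁻¹) (n : ℂ) = ((-1) ^ i * (i.factorial : ℂ)) / (n : ℂ) ^ (i + 1) := by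
    rw [iteratedDeriv_eq_iterate]
    refine (iter_deriv_inv i (n : ℂ)).trans ?_
    rw [div_eq_mul_inv, show (-1 - i : ℤ) = -((i + 1 : ℕ) : ℤ) by push_cast; ring, zpow_neg, zpow_natCast]
  rw [h3] at h2
  push_cast
  exact h2

theorem kur_seq_eq (z0 : ℂ) (f : ℂ → ℂ) (j : ℕ) :
    kurSeq (PowerSeries.derivative ℂ) (kurT z0 fun z => z) (kurT z0 f) j =
      kurT z0 (fun z => if j = 0 then z else iteratedDeriv (j - 1) f z) := by
  unfold kurSeq
  split_ifs with h
  · rfl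
  · exact kurT_iter z0 f (j - 1)

theorem kur_seq_an {z0 : ℂ} {f : ℂ → ℂ} (hf : AnalyticAt ℂ f z0) (j : ℕ) :
    AnalyticAt ℂ (fun z => if j = 0 then z else iteratedDeriv (j - 1) f z) z0 := by
  split_ifs with h
  · exact analyticAt_id
  · exact kur_iter_an hf _

theorem kur_point (K : ℂ → ℂ) (hmero : MeromorphicOn K Set.univ) :
    ∃ z0 : ℂ, 0 < z0.re ∧ AnalyticAt ℂ K z0 ∧ AnalyticAt ℂ K (z0 - 1) := by
  have h1 : ({z | AnalyticAt ℂ K z}ᶜ).Countable := by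
    simpa using hmero.countable_compl_analyticAt_inter
  have h2 : ((fun z : ℂ => z - 1) ⁻¹' {z | AnalyticAt ℂ K z}ᶜ).Countable :=
    h1.preimage (fun a b h => by simpa using h)
  have h3 := (h1.union h2).dense_compl ℝ
  have ho : IsOpen {z : ℂ | 0 < z.re} := isOpen_lt continuous_const Complex.continuous_re
  obtain ⟨z, hz, hzz⟩ := h3.inter_open_nonempty _ ho ⟨1, by simp⟩
  simp only [Set.mem_compl_iff, Set.mem_union, Set.mem_preimage, Set.mem_ofPred_eq, not_or, not_not] at hzz
  exact ⟨z, hz, hzz.1, hzz.2⟩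

/-- Every function meromorphic on ℂ satisfying the Kurepa functional equation
`K z - K (z-1) = Γ z` (wherever all three terms are analytic) is differentially
transcendental. -/
theorem kurepa_diffTranscendental (K : ℂ → ℂ)
    (hmero : MeromorphicOn K Set.univ)
    (hfe : ∀ z : ℂ, AnalyticAt ℂ K z → AnalyticAt ℂ K (z - 1) →
      AnalyticAt ℂ Complex.Gamma z → K z - K (z - 1) = Complex.Gamma z) :
    ¬ DifferentiallyAlgebraic K := by
  rintro ⟨n, P, hP, hrel⟩
  obtain ⟨z0, hz0, hK0, hK1⟩ := kur_point K hmero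
  have hcomp : ∀ {z : ℂ}, AnalyticAt ℂ K (z - 1) → AnalyticAt ℂ (fun z => K (z - 1)) z := by
    intro z h
    exact h.comp (f := fun z => z - 1) (analyticAt_id.sub analyticAt_const)
  have hsub : Filter.Tendsto (fun z : ℂ => z - 1) (nhds z0) (nhds (z0 - 1)) :=
    (continuous_id.sub continuous_const).tendsto z0
  have hK1' := hsub.eventually hK1.eventually_analyticAt
  have ho : IsOpen {z : ℂ | 0 < z.re} := isOpen_lt continuous_const Complex.continuous_re
  -- the first dependence
  have dep0 : ¬ AlgebraicIndependent ℂ (fun i : Fin (n + 2) =>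
      kurSeq (PowerSeries.derivative ℂ) (kurT z0 fun z => z) (kurT z0 K) i) := by
    simp only [kur_seq_eq]
    refine kurT_dep (fun (i : Fin (n + 2)) z => if (i : ℕ) = 0 then z else iteratedDeriv (i - 1) K z)
      (fun i => kur_seq_an hK0 i) P hP ?_
    filter_upwards [hK0.eventually_analyticAt] with z hz
    exact hrel z hz
  have dep1 : ¬ AlgebraicIndependent ℂ (fun i : Fin (n + 2) =>
      kurSeq (PowerSeries.derivative ℂ) (kurT z0 fun z => z) (kurT z0 fun z => K (z - 1)) i) := by
    simp only [kur_seq_eq]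
    refine kurT_dep (fun (i : Fin (n + 2)) z => if (i : ℕ) = 0 then z else
        iteratedDeriv (i - 1) (fun z => K (z - 1)) z)
      (fun i => kur_seq_an (hcomp hK1) i) (kurTrans n (-1) P) ?_ ?_
    · intro h0
      have := kurTrans_inv n (-1) P
      rw [h0, map_zero] at this
      exact hP this.symm
    · filter_upwards [hK1'] with z hz
      rw [kurTrans_eval]
      rw [← hrel (z - 1) hz]
      congr 2
      funext i
      rw [iteratedDeriv_comp_sub_const]
      split_ifs <;> ring
  have hdiff : kurT z0 K - kurT z0 (fun z => K (z - 1)) = kurT z0 Complex.Gamma := by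
    rw [sub_eq_iff_eq_add, ← kurT_add z0 (kur_gamma_an hz0) (hcomp hK1)]
    apply kurT_congr
    filter_upwards [hK1', hK0.eventually_analyticAt, ho.mem_nhds hz0] with z h1 h2 h3
    rw [← hfe z h2 h1 (kur_gamma_an h3)]
    ring
  have hne : kurT z0 K - kurT z0 (fun z => K (z - 1)) ≠ 0 := by
    rw [hdiff]
    intro h
    exact Complex.Gamma_ne_zero_of_re_pos hz0 (kurT_eq_zero (kur_gamma_an hz0) h).self_of_nhds
  have hp : (kurT z0 K - kurT z0 (fun z => K (z - 1))) * kurT z0 Complex.digamma =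
      PowerSeries.derivative ℂ (kurT z0 K - kurT z0 (fun z => K (z - 1))) := by
    rw [hdiff, ← kurT_deriv, ← kurT_mul z0 (kur_gamma_an hz0) (kur_digamma_an hz0)]
    apply kurT_congr
    filter_upwards [ho.mem_nhds hz0] with z hz
    rw [Complex.digamma_def, logDeriv_apply, mul_div_cancel₀ _ (Complex.Gamma_ne_zero_of_re_pos hz)]
  obtain ⟨N, hN⟩ := kur_step1 (PowerSeries.derivative ℂ) (kurT z0 fun z => z) (kurT z0 K)
    (kurT z0 fun z => K (z - 1)) (kurT z0 Complex.digamma) (kurT_id_transc z0) (kurT_id_deriv z0)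
    (n + 2) (n + 2) dep0 dep1 hne hp
  let v : Option (Fin N) → ℂ → ℂ := fun o z => o.elim z (fun i => iteratedDeriv (i : ℕ) Complex.digamma z)
  have hv : ∀ {z : ℂ}, 0 < z.re → ∀ o, AnalyticAt ℂ (v o) z := by
    intro z hz o
    rcases o with _ | i
    · exact analyticAt_id
    · exact kur_iter_an (kur_digamma_an hz) i
  have hN' : ¬ AlgebraicIndependent ℂ (fun o => kurT z0 (v o)) := by
    have e : (fun o => kurT z0 (v o)) = (fun o : Option (Fin N) => o.elim (kurT z0 fun z => z)
        (fun i => (PowerSeries.derivative ℂ)^[(i : ℕ)] (kurT z0 Complex.digamma))) := by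
      funext o
      rcases o with _ | i
      · rfl
      · exact (kurT_iter z0 Complex.digamma i).symm
    rw [e]
    exact hN
  obtain ⟨Q, hQ, hQ0⟩ := kurT_dep' v (hv hz0) hN'
  have hall := AnalyticOnNhd.eqOn_zero_of_preconnected_of_eventuallyEq_zero
    (f := fun z => MvPolynomial.eval (fun o => v o z) Q) (U := {z : ℂ | 0 < z.re})
    (fun z hz => kurT_an v (hv hz) Q) (convex_halfSpace_re_gt 0).isPreconnected hz0 hQ0
  refine kur_step2 N (fun i => (-1) ^ (i : ℕ) * ((i : ℕ).factorial : ℂ)) (fun i => ?_)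
    (fun i n => iteratedDeriv (i : ℕ) Complex.digamma (n : ℂ))
    (fun i n hn => kur_digamma_rec i n hn) Q hQ (fun m hm => ?_)
  · exact mul_ne_zero (pow_ne_zero _ (by norm_num)) (by exact_mod_cast Nat.factorial_ne_zero _)
  · have hpos : 0 < ((m : ℂ)).re := by simp; omega
    have := hall hpos
    exact this
end
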